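/- arXiv:1708.08647 — 8 statements merged into one kernel-verified Lean document; each statement's English description precedes it below -/
import Mathlib

section
/- There exists a constant C > 0 such that for all integers N ≥ 2 and 1 ≤ k ≤ N there exists an (N,k)-witnessed strong selector consisting of at most C·k³·log N sets. -/
/-!
The proof is the probabilistic method, phrased as counting. Colour `[N]` by a uniformly random
`f : [N] → Fin k` and let `S` be the colour class of `0`, so that every element lies in `S`
independently with probability `1/k`. For `|X| = k`, `x ∈ X`, `y ∉ X`, the event
`S ∩ X = {x} ∧ y ∈ S` has probability `(1/k)² (1 - 1/k)^(k-1) ≥ 1 / (3k²)`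
(`card_goodColorings`). There are at most `N^(k+2)` triples `(X, x, y)`, so by the union bound
(`exists_hitting_family`) `m` independent sets work as soon as
`N^(k+2) · (1 - 1/(3k²))^m < 1`, which holds once `m > 3k² (k+2) log N`.
-/

/-- Union bound: if each test `a ∈ A` is passed by at least a `1/D` fraction of `Ω` and
`|A| < exp (m / D)`, then some `m`-tuple from `Ω` contains, for every test, an element passing it. -/
lemma exists_hitting_family {α Ω : Type*} [Fintype Ω] [DecidableEq Ω] [Nonempty Ω]
    (A : Finset α) (good : α → Finset Ω) (D : ℝ) (m : ℕ)
    (hgood : ∀ a ∈ A, (Fintype.card Ω : ℝ) * D⁻¹ ≤ (good a).card)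
    (hm : (A.card : ℝ) < Real.exp (m * D⁻¹)) :
    ∃ F : Fin m → Ω, ∀ a ∈ A, ∃ i, F i ∈ good a := by
  classical
  by_contra! hcon
  have hT : (0 : ℝ) < Fintype.card Ω := by exact_mod_cast Fintype.card_pos
  have hsub : (Finset.univ : Finset (Fin m → Ω)) ⊆
      A.biUnion (fun a => Fintype.piFinset (fun _ : Fin m => (good a)ᶜ)) := by
    intro F _
    obtain ⟨a, ha, h⟩ := hcon F
    simp only [Finset.mem_biUnion, Fintype.mem_piFinset, Finset.mem_compl]
    exact ⟨a, ha, h⟩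
  have hcard : ((Fintype.card Ω : ℝ)) ^ m ≤
      ∑ a ∈ A, ((((good a)ᶜ).card : ℝ)) ^ m := by
    have h := (Finset.card_le_card hsub).trans Finset.card_biUnion_le
    simp only [Finset.card_univ, Fintype.card_pi, Fintype.card_piFinset, Finset.prod_const,
      Fintype.card_fin] at h
    exact_mod_cast h
  have hterm : ∀ a ∈ A, ((((good a)ᶜ).card : ℝ)) ^ m ≤
      (Fintype.card Ω : ℝ) ^ m * Real.exp (-(m * D⁻¹)) := by
    intro a ha
    have h1 : (((good a)ᶜ).card : ℝ) ≤ Fintype.card Ω * Real.exp (-D⁻¹) := by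
      rw [Finset.card_compl, Nat.cast_sub (Finset.card_le_univ _)]
      have := hgood a ha
      have h2 := Real.add_one_le_exp (-D⁻¹)
      nlinarith
    calc _ ≤ ((Fintype.card Ω : ℝ) * Real.exp (-D⁻¹)) ^ m := by gcongr
      _ = _ := by
        rw [mul_pow, ← Real.exp_nat_mul]
        congr 2
        ring
  have h3 := hcard.trans (Finset.sum_le_sum hterm)
  rw [Finset.sum_const, nsmul_eq_mul, Real.exp_neg] at h3
  have hTm : (0 : ℝ) < (Fintype.card Ω : ℝ) ^ m := by positivity
  have h4 : (A.card : ℝ) * (Real.exp (m * D⁻¹))⁻¹ < 1 := by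
    rw [← div_eq_mul_inv, div_lt_one (Real.exp_pos _)]
    exact hm
  nlinarith

lemma one_third_le_pow (n : ℕ) : (1 / 3 : ℝ) ≤ ((n : ℝ) / (n + 1)) ^ n := by
  rcases Nat.eq_zero_or_pos n with rfl | hn
  · norm_num
  have hn' : (0 : ℝ) < n := by exact_mod_cast hn
  -- `(1 + 1/n)^n ≤ e < 3`
  have h1 : (((n : ℝ) + 1) / n) ^ n ≤ 3 := by
    calc (((n : ℝ) + 1) / n) ^ n ≤ (Real.exp (1 / n)) ^ n := by
          gcongr
          have := Real.add_one_le_exp (1 / (n : ℝ))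
          rw [add_div, div_self hn'.ne']
          linarith
      _ = Real.exp 1 := by
          rw [← Real.exp_nat_mul]
          congr 1
          field_simp
      _ ≤ 3 := by linarith [Real.exp_one_lt_d9]
  rw [one_div, ← inv_div ((n : ℝ) + 1) n, inv_pow]
  exact inv_anti₀ (by positivity) h1

/-- The colourings whose colour class of `0` meets `X` exactly in `x` and contains `y`
(when `x ∈ X` and `y ∉ X`). -/
def goodColorings {N : ℕ} (n : ℕ) (X : Finset (Fin N)) (x y : Fin N) :
    Finset (Fin N → Fin (n + 1)) :=
  Fintype.piFinset fun z =>
    if z = x ∨ z = y then {0} else if z ∈ X then Finset.univ.erase 0 else Finset.univ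

/-- At least a `1 / (3k²)` fraction of all colourings is good, where `k = n + 1`. -/
lemma card_goodColorings {N n : ℕ} (X : Finset (Fin N)) (x y : Fin N)
    (hX : X.card = n + 1) (hx : x ∈ X) (hy : y ∉ X) :
    (Fintype.card (Fin N → Fin (n + 1)) : ℝ) * (3 * ((n : ℝ) + 1) ^ 2)⁻¹ ≤
      (goodColorings n X x y).card := by
  have hk : (0 : ℝ) < (n : ℝ) + 1 := by positivity
  have hxy : x ≠ y := fun h => hy (h ▸ hx)
  -- the number of colours allowed at `z`, as `k` times a product of three independent factors
  have hpt : ∀ z : Fin N,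
      (((if z = x ∨ z = y then {0} else if z ∈ X then Finset.univ.erase 0 else Finset.univ :
        Finset (Fin (n + 1))).card : ℕ) : ℝ) =
      ((n : ℝ) + 1) * ((if z = x then ((n : ℝ) + 1)⁻¹ else 1) *
        (if z = y then ((n : ℝ) + 1)⁻¹ else 1) *
        (if z ∈ X.erase x then (n : ℝ) / (n + 1) else 1)) := by
    intro z
    by_cases h1 : z = x
    · subst h1
      simp [hxy, hk.ne']
    by_cases h2 : z = y
    · subst h2
      simp [hy, h1, hk.ne']
    by_cases h3 : z ∈ X
    · simp [h1, h2, h3]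
      field_simp
    · simp [h1, h2, h3]
  have hcard : ((goodColorings n X x y).card : ℝ) =
      ((n : ℝ) + 1) ^ N * (((n : ℝ) + 1)⁻¹ * ((n : ℝ) + 1)⁻¹ * ((n : ℝ) / (n + 1)) ^ n) := by
    rw [goodColorings, Fintype.card_piFinset, Nat.cast_prod, Finset.prod_congr rfl
      (fun z _ => hpt z)]
    simp only [Finset.prod_mul_distrib, Finset.prod_ite_eq', Finset.prod_const, Finset.card_univ,
      Fintype.card_fin, Finset.mem_univ, if_true, Finset.prod_ite_mem, Finset.univ_inter,
      Finset.card_erase_of_mem hx, hX, Nat.add_sub_cancel]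
  rw [hcard]
  have hT : (Fintype.card (Fin N → Fin (n + 1)) : ℝ) = ((n : ℝ) + 1) ^ N := by simp
  rw [hT]
  gcongr
  calc (3 * ((n : ℝ) + 1) ^ 2)⁻¹ = ((n : ℝ) + 1)⁻¹ * ((n : ℝ) + 1)⁻¹ * (1 / 3) := by
        field_simp
    _ ≤ _ := by
        gcongr
        exact one_third_le_pow n

lemma colorClass_of_good {N n : ℕ} {X : Finset (Fin N)} {x y : Fin N}
    (hx : x ∈ X) (hy : y ∉ X) {f : Fin N → Fin (n + 1)} (hf : f ∈ goodColorings n X x y) :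
    Finset.univ.filter (fun z => f z = 0) ∩ X = {x} ∧
      y ∈ Finset.univ.filter (fun z => f z = 0) := by
  rw [goodColorings, Fintype.mem_piFinset] at hf
  have hfx : f x = 0 := by simpa using hf x
  have hfy : f y = 0 := by simpa using hf y
  refine ⟨?_, by simp [hfy]⟩
  ext z
  simp only [Finset.mem_inter, Finset.mem_filter, Finset.mem_univ, true_and,
    Finset.mem_singleton]
  constructor
  · rintro ⟨hz, hzX⟩
    by_contra hzx
    have hzy : z ≠ y := fun h => hy (h ▸ hzX)
    have := hf z
    simp [hzx, hzy, hzX, hz] at this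
  · rintro rfl
    exact ⟨hfx, hx⟩


/-- There exists a constant `C > 0` such that for all integers `N ≥ 2` and
`1 ≤ k ≤ N` there exists an `(N,k)`-witnessed strong selector consisting of at most
`C·k³·log N` sets.  A sequence `S₁,…,S_m` of subsets of `[N]` is an `(N,k)`-wss if for every
`X ⊆ [N]` with `|X| = k`, every `x ∈ X` and every `y ∉ X`, there is an index `i` with
`S i ∩ X = {x}` and `y ∈ S i`. -/
theorem witnessed_strong_selector_exists :
    ∃ C : ℝ, 0 < C ∧
      ∀ N k : ℕ, 2 ≤ N → 1 ≤ k → k ≤ N →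
        ∃ (m : ℕ) (S : Fin m → Finset (Fin N)),
          (m : ℝ) ≤ C * (k : ℝ) ^ 3 * Real.log N ∧
          ∀ X : Finset (Fin N), X.card = k →
            ∀ x ∈ X, ∀ y : Fin N, y ∉ X →
              ∃ i : Fin m, S i ∩ X = {x} ∧ y ∈ S i := by
  refine ⟨11, by norm_num, ?_⟩
  intro N k hN hk _
  obtain ⟨n, rfl⟩ : ∃ n, k = n + 1 := ⟨k - 1, by omega⟩
  set A : Finset (Finset (Fin N) × Fin N × Fin N) :=
    ((Finset.univ.powersetCard (n + 1)) ×ˢ Finset.univ).filter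
      (fun t => t.2.1 ∈ t.1 ∧ t.2.2 ∉ t.1) with hA
  have hAcard : A.card ≤ N ^ (n + 3) := by
    calc A.card ≤ N.choose (n + 1) * (N * N) := by
          refine (Finset.card_filter_le _ _).trans ?_
          simp
      _ ≤ N ^ (n + 1) * (N * N) := by
          gcongr
          exact Nat.choose_le_pow N (n + 1)
      _ = N ^ (n + 3) := by ring
  have hN0 : (0 : ℝ) < N := by positivity
  have hlog : (1 / 2 : ℝ) ≤ Real.log N := by
    have h2 : Real.log 2 ≤ Real.log N :=
      Real.log_le_log (by norm_num) (by exact_mod_cast hN)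
    linarith [Real.log_two_gt_d9]
  set D : ℝ := 3 * ((n : ℝ) + 1) ^ 2 with hD
  have hD0 : 0 < D := by positivity
  set B : ℝ := D * (((n : ℝ) + 3) * Real.log N) with hB
  have hB0 : 0 ≤ B := by positivity
  have hlt : (A.card : ℝ) < Real.exp ((⌊B⌋₊ + 1 : ℕ) * D⁻¹) := by
    have h1 : (A.card : ℝ) ≤ (N : ℝ) ^ (n + 3) := by exact_mod_cast hAcard
    have h2 : (N : ℝ) ^ (n + 3) = Real.exp (((n : ℝ) + 3) * Real.log N) := by
      rw [← Real.exp_log (pow_pos hN0 (n + 3)), Real.log_pow]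
      push_cast
      rfl
    rw [h2] at h1
    refine h1.trans_lt (Real.exp_lt_exp.2 ?_)
    rw [← div_eq_mul_inv, lt_div_iff₀ hD0, mul_comm]
    push_cast
    exact Nat.lt_floor_add_one B
  obtain ⟨F, hF⟩ := exists_hitting_family A (fun t => goodColorings n t.1 t.2.1 t.2.2) D
    (⌊B⌋₊ + 1) (by
      rintro ⟨X, x, y⟩ ht
      simp only [hA, Finset.mem_filter, Finset.mem_product, Finset.mem_powersetCard] at ht
      exact card_goodColorings X x y ht.1.1.2 ht.2.1 ht.2.2) hlt
  refine ⟨⌊B⌋₊ + 1, fun i => Finset.univ.filter (fun z => F i z = 0), ?_, ?_⟩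
  · -- `k + 2 ≤ 3k` gives `B ≤ 9k³ log N`, and the rounding costs `1 ≤ 2 k³ log N`
    have hfl := Nat.floor_le hB0
    push_cast
    have hn : (0 : ℝ) ≤ n := Nat.cast_nonneg n
    have h1 : B ≤ 9 * ((n : ℝ) + 1) ^ 3 * Real.log N := by
      calc B ≤ D * ((3 * ((n : ℝ) + 1)) * Real.log N) := by
            rw [hB]
            gcongr
            linarith
        _ = _ := by
            rw [hD]
            ring
    have h2 : (1 : ℝ) ≤ ((n : ℝ) + 1) ^ 3 := one_le_pow₀ (by linarith)
    nlinarith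
  · intro X hX x hx y hy
    obtain ⟨i, hi⟩ := hF (X, x, y) (by simp [hA, hX, hx, hy])
    exact ⟨i, colorClass_of_good hx hy hi⟩
end

section
/- There exists a constant C > 0 such that for all integers N ≥ 2 and 1 ≤ k, l ≤ N there exists an (N,k,l)-witnessed cluster-aware strong selector consisting of at most C·(k+l)·l·k²·log N sets. -/
/-!
The selector is found by the probabilistic method, carried out by counting. A random set is a
product `A ×ˢ B`, where each node joins `A` with probability `1/(k+1)` and each cluster joins `B`
with probability `1/(l+1)`, all independently; this is modelled by uniformly random colourings
`f : Fin N → Fin (k+1)` and `g : Fin N → Fin (l+1)`, with `A` and `B` the classes of colour `0`.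

For fixed `Cl, c, X, x, y`, the set succeeds when `x, y` are in `A`, the other `k - 1` nodes of
`X` are not, `c` is in `B`, and the `l` clusters of `Cl` are not. Since
`(q/(q+1))^a ≥ 1/e ≥ 1/3` for `a ≤ q`, this has probability at least `1/(72 l k²)`
(`card_colourings_lower`). There are at most `N^(k+l+3)` requirements `(Cl, c, X, x, y)`, and
choosing sets greedily, each one meeting at least a fraction `1/(72 l k²)` of the requirements
still unmet (`exists_greedy_cover`), meets all of them after `O((k+l) l k² log N)` steps.
-/

/-- Greedy covering: if each element of `T` is hit by at least a fraction `1/M` of all `ω`, then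
some `m` choices of `ω` leave at most `(1 - 1/M)^m * #T` elements of `T` unhit. -/
lemma exists_greedy_cover {Ω E : Type*} [Fintype Ω] [Nonempty Ω] (R : Ω → E → Prop)
    [∀ ω e, Decidable (R ω e)] (T : Finset E) (M : ℝ) (hM : 1 ≤ M)
    (h : ∀ e ∈ T, (Fintype.card Ω : ℝ) ≤ M * (Finset.univ.filter fun ω => R ω e).card) (m : ℕ) :
    ∃ s : Fin m → Ω,
      ((T.filter fun e => ∀ i, ¬ R (s i) e).card : ℝ) ≤ (1 - 1 / M) ^ m * T.card := by
  induction m with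
  | zero => exact ⟨Fin.elim0, by simp⟩
  | succ m ih =>
    obtain ⟨s, hs⟩ := ih
    set U := T.filter fun e => ∀ i, ¬ R (s i) e with hU
    have hM0 : 0 < M := by linarith
    -- Double counting of hit pairs: an average `ω` hits a fraction `1/M` of `U`.
    obtain ⟨ω, -, hω⟩ : ∃ ω ∈ (Finset.univ : Finset Ω),
        (U.card : ℝ) / M ≤ ((U.filter fun e => R ω e).card : ℝ) := by
      apply Finset.exists_le_of_sum_le Finset.univ_nonempty
      have hdc : ∑ ω : Ω, ((U.filter fun e => R ω e).card : ℝ)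
          = ∑ e ∈ U, ((Finset.univ.filter fun ω => R ω e).card : ℝ) := by
        exact_mod_cast Finset.sum_card_bipartiteAbove_eq_sum_card_bipartiteBelow
          (s := (Finset.univ : Finset Ω)) (t := U) R
      rw [hdc, Finset.sum_const, nsmul_eq_mul, Finset.card_univ]
      calc (Fintype.card Ω : ℝ) * (U.card / M) = ∑ e ∈ U, (Fintype.card Ω : ℝ) / M := by
            rw [Finset.sum_const, nsmul_eq_mul]; ring
        _ ≤ _ := by
            refine Finset.sum_le_sum fun e he => ?_
            rw [div_le_iff₀' hM0]
            exact h e (Finset.mem_filter.1 he).1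
    refine ⟨Fin.cons ω s, ?_⟩
    have heq : (T.filter fun e => ∀ i, ¬ R ((Fin.cons ω s : Fin (m + 1) → Ω) i) e)
        = U.filter fun e => ¬ R ω e := by
      ext e
      simp only [hU, Finset.mem_filter, Fin.forall_fin_succ, Fin.cons_zero, Fin.cons_succ]
      tauto
    have hsplit : ((U.filter fun e => R ω e).card : ℝ) + (U.filter fun e => ¬ R ω e).card
        = U.card := by
      exact_mod_cast Finset.card_filter_add_card_filter_not (s := U) (fun e => R ω e)
    rw [heq]
    have h1 : 0 ≤ 1 - 1 / M := by
      rw [sub_nonneg, div_le_one hM0]; exact hM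
    calc ((U.filter fun e => ¬ R ω e).card : ℝ) ≤ (1 - 1 / M) * U.card := by
          have : (1 - 1 / M) * (U.card : ℝ) = U.card - U.card / M := by ring
          linarith
      _ ≤ (1 - 1 / M) * ((1 - 1 / M) ^ m * T.card) := by gcongr
      _ = _ := by ring

/-- The bound `(1 + 1/q)^a ≤ e ≤ 3` for `a ≤ q`, cleared of denominators. -/
lemma succ_pow_le_three_mul_pow {q a : ℕ} (hq : 1 ≤ q) (ha : a ≤ q) :
    (q + 1) ^ a ≤ 3 * q ^ a := by
  have hq0 : (0 : ℝ) < q := by exact_mod_cast hq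
  have h1 : (1 + 1 / (q : ℝ)) ^ a ≤ 3 := by
    calc (1 + 1 / (q : ℝ)) ^ a ≤ (Real.exp (1 / q)) ^ a := by
          gcongr
          linarith [Real.add_one_le_exp (1 / (q : ℝ))]
      _ = Real.exp (a / q) := by rw [← Real.exp_nat_mul]; ring_nf
      _ ≤ Real.exp 1 := by
          rw [Real.exp_le_exp, div_le_one hq0]; exact_mod_cast ha
      _ ≤ 3 := by linarith [Real.exp_one_lt_d9]
  have h2 : ((q : ℝ) + 1) ^ a ≤ 3 * (q : ℝ) ^ a := by
    calc ((q : ℝ) + 1) ^ a = (1 + 1 / (q : ℝ)) ^ a * (q : ℝ) ^ a := by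
          rw [← mul_pow]; congr 1; field_simp
      _ ≤ _ := by gcongr
  exact_mod_cast h2

/-- A uniformly random `(q+1)`-colouring has colour `0` on all of `P` and nowhere on `Q` with
probability at least `1 / (3 (2q)^|P|)`, provided `|Q| ≤ q`. -/
lemma card_colourings_lower {N q : ℕ} (hq : 1 ≤ q) (P Q : Finset (Fin N)) (hPQ : Disjoint P Q)
    (hQ : Q.card ≤ q) :
    (q + 1) ^ N ≤ 3 * (2 * q) ^ P.card *
      (Finset.univ.filter fun f : Fin N → Fin (q + 1) =>
        (∀ i ∈ P, f i = 0) ∧ ∀ i ∈ Q, f i ≠ 0).card := by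
  classical
  set G := Finset.univ.filter fun f : Fin N → Fin (q + 1) =>
        (∀ i ∈ P, f i = 0) ∧ ∀ i ∈ Q, f i ≠ 0 with hG
  let t : Fin N → Finset (Fin (q + 1)) := fun i =>
    if i ∈ P then {0} else if i ∈ Q then {0}ᶜ else Finset.univ
  have hGt : G = Fintype.piFinset t := by
    ext f
    simp only [hG, Finset.mem_filter, Finset.mem_univ, true_and, Fintype.mem_piFinset, t]
    constructor
    · rintro ⟨h1, h2⟩ i
      split_ifs with hP hQ'
      · simpa using h1 i hP
      · simpa using h2 i hQ'
      · simp
    · intro h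
      refine ⟨fun i hi => by simpa [hi] using h i, fun i hi => ?_⟩
      have hn : i ∉ P := fun hp => Finset.disjoint_left.1 hPQ hp hi
      simpa [hi, hn] using h i
  have hcard : G.card * ((q + 1) ^ P.card * (q + 1) ^ Q.card) = (q + 1) ^ N * q ^ Q.card := by
    have e1 : ∀ (A : Finset (Fin N)) (b : ℕ), b ^ A.card = ∏ i, if i ∈ A then b else 1 := by
      intro A b
      rw [Finset.prod_ite_mem, Finset.univ_inter, Finset.prod_const]
    have e2 : (q + 1) ^ N = ∏ _i : Fin N, (q + 1) := by simp
    rw [hGt, Fintype.card_piFinset, e1 P, e1 Q (q + 1), e1 Q q, e2, ← Finset.prod_mul_distrib,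
      ← Finset.prod_mul_distrib, ← Finset.prod_mul_distrib]
    refine Finset.prod_congr rfl fun i _ => ?_
    by_cases hP : i ∈ P
    · have hn : i ∉ Q := Finset.disjoint_left.1 hPQ hP
      simp [t, hP, hn]
    · by_cases hQ' : i ∈ Q
      · simp [t, hP, hQ', Finset.card_compl, mul_comm]
      · simp [t, hP, hQ']
  have hpos : 0 < q ^ Q.card := by positivity
  refine Nat.le_of_mul_le_mul_right ?_ hpos
  rw [← hcard]
  calc G.card * ((q + 1) ^ P.card * (q + 1) ^ Q.card)
      ≤ G.card * ((2 * q) ^ P.card * (3 * q ^ Q.card)) := by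
        gcongr
        · omega
        · exact succ_pow_le_three_mul_pow hq hQ
    _ = _ := by ring

theorem witnessed_cluster_aware_strong_selector_exists :
    ∃ C : ℝ, 0 < C ∧
      ∀ N k l : ℕ, 2 ≤ N → 1 ≤ k → k ≤ N → 1 ≤ l → l ≤ N →
        ∃ (m : ℕ) (S : Fin m → Finset (Fin N × Fin N)),
          (m : ℝ) ≤ C * ((k : ℝ) + l) * l * (k : ℝ) ^ 2 * Real.log N ∧
          ∀ Cl : Finset (Fin N), Cl.card = l →
            ∀ c : Fin N, c ∉ Cl →
              ∀ X : Finset (Fin N × Fin N), X.card = k → (∀ p ∈ X, p.2 = c) →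
                ∀ x ∈ X, ∀ y : Fin N × Fin N, y.2 = c → y ∉ X →
                  ∃ i : Fin m, S i ∩ X = {x} ∧ y ∈ S i ∧ ∀ p ∈ S i, p.2 ∉ Cl := by
  classical
  refine ⟨220, by norm_num, ?_⟩
  intro N k l hN hk hkN hl hlN
  let Ω := (Fin N → Fin (k + 1)) × (Fin N → Fin (l + 1))
  -- A requirement is `(Cl, c, X, x, y)`, with `X`, `x`, `y` replaced by their node IDs.
  let T : Finset (Finset (Fin N) × Fin N × Finset (Fin N) × Fin N × Fin N) := 
    ((Finset.univ.powersetCard l) ×ˢ Finset.univ ×ˢ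
    (Finset.univ.powersetCard k) ×ˢ Finset.univ ×ˢ Finset.univ).filter
      fun e => e.2.1 ∉ e.1 ∧ e.2.2.2.1 ∈ e.2.2.1 ∧ e.2.2.2.2 ∉ e.2.2.1
  let R : Ω → Finset (Fin N) × Fin N × Finset (Fin N) × Fin N × Fin N → Prop := fun ω e =>
    ((∀ i ∈ ({e.2.2.2.1, e.2.2.2.2} : Finset (Fin N)), ω.1 i = 0) ∧
      ∀ i ∈ e.2.2.1.erase e.2.2.2.1, ω.1 i ≠ 0) ∧
    ((∀ i ∈ ({e.2.1} : Finset (Fin N)), ω.2 i = 0) ∧ ∀ i ∈ e.1, ω.2 i ≠ 0)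
  have hk1 : (1 : ℝ) ≤ k := by exact_mod_cast hk
  have hl1 : (1 : ℝ) ≤ l := by exact_mod_cast hl
  have hlk : (1 : ℝ) ≤ l * (k : ℝ) ^ 2 := one_le_mul_of_one_le_of_one_le hl1 (one_le_pow₀ hk1)
  set M : ℝ := 72 * (l * (k : ℝ) ^ 2) with hMdef
  have hM : 1 ≤ M := by linarith
  have hM0 : 0 < M := by linarith
  have hprob : ∀ e ∈ T,
      (Fintype.card Ω : ℝ) ≤ M * (Finset.univ.filter fun ω => R ω e).card := by
    rintro ⟨Cl, c, X, x, y⟩ he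
    simp only [T, Finset.mem_filter, Finset.mem_product, Finset.mem_powersetCard,
      Finset.mem_univ, Finset.subset_univ, true_and, and_true] at he
    obtain ⟨⟨hCl, hX⟩, hc, hx, hy⟩ := he
    have hxy : x ≠ y := fun h => hy (h ▸ hx)
    have h1 := card_colourings_lower (N := N) hk {x, y} (X.erase x)
      (by simp [hy]) (by rw [← hX]; exact Finset.card_erase_le)
    have h2 := card_colourings_lower (N := N) hl {c} Cl (by simpa using hc) hCl.le
    rw [Finset.card_pair hxy] at h1
    rw [Finset.card_singleton, pow_one] at h2
    have h3 : (Finset.univ.filter fun ω => R ω (Cl, c, X, x, y)) =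
        (Finset.univ.filter fun f : Fin N → Fin (k + 1) =>
          (∀ i ∈ ({x, y} : Finset (Fin N)), f i = 0) ∧ ∀ i ∈ X.erase x, f i ≠ 0) ×ˢ
        (Finset.univ.filter fun g : Fin N → Fin (l + 1) =>
          (∀ i ∈ ({c} : Finset (Fin N)), g i = 0) ∧ ∀ i ∈ Cl, g i ≠ 0) := by
      rw [← Finset.filter_product, Finset.univ_product_univ]
    have h4 : Fintype.card Ω = (k + 1) ^ N * (l + 1) ^ N := by
      simp [Ω]
    rw [h3, Finset.card_product, h4]
    have h5 := Nat.mul_le_mul h1 h2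
    have h6 : (((k + 1) ^ N * (l + 1) ^ N : ℕ) : ℝ) ≤ _ := Nat.cast_le.2 h5
    refine h6.trans (le_of_eq ?_)
    rw [hMdef]
    push_cast
    ring
  have hT : T.card ≤ N ^ (k + l + 3) := by
    refine (Finset.card_filter_le _ _).trans ?_
    simp only [Finset.card_product, Finset.card_powersetCard, Finset.card_univ, Fintype.card_fin]
    calc N.choose l * (N * (N.choose k * (N * N))) ≤ N ^ l * (N * (N ^ k * (N * N))) := by
          gcongr <;> exact Nat.choose_le_pow _ _
      _ = _ := by ring
  have hN0 : (0 : ℝ) < N := by exact_mod_cast (by omega : 0 < N)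
  have hlog : 1 / 2 ≤ Real.log N := by
    have : Real.log 2 ≤ Real.log N := Real.log_le_log (by norm_num) (by exact_mod_cast hN)
    linarith [Real.log_two_gt_d9]
  set L : ℝ := (k + l + 3) * Real.log N with hL
  have hL0 : 0 ≤ L := by positivity
  set m := ⌊M * L⌋₊ + 1 with hm
  have hmL : M * L < m := by
    rw [hm]; push_cast; exact Nat.lt_floor_add_one _
  obtain ⟨s, hs⟩ := exists_greedy_cover R T M hM hprob m
  have hlt : (1 - 1 / M) ^ m * T.card < 1 := by
    have a1 : (1 - 1 / M) ^ m ≤ Real.exp (-(m / M)) := by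
      have : Real.exp (-(m / M)) = (Real.exp (-(1 / M))) ^ m := by
        rw [← Real.exp_nat_mul]; ring_nf
      rw [this]
      refine pow_le_pow_left₀ ?_ ?_ _
      · rw [sub_nonneg, div_le_one hM0]; exact hM
      · linarith [Real.add_one_le_exp (-(1 / M))]
    have a2 : (T.card : ℝ) ≤ Real.exp L := by
      have : Real.exp L = (N : ℝ) ^ (k + l + 3) := by
        rw [hL, ← Real.exp_log (pow_pos hN0 _), Real.log_pow]; push_cast; rfl
      rw [this]; exact_mod_cast hT
    calc (1 - 1 / M) ^ m * T.card ≤ Real.exp (-(m / M)) * Real.exp L := by gcongr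
      _ = Real.exp (L - m / M) := by rw [← Real.exp_add]; ring_nf
      _ < 1 := by
        rw [Real.exp_lt_one_iff, sub_neg, lt_div_iff₀ hM0]; linarith
  have hempty : (T.filter fun e => ∀ i, ¬ R (s i) e) = ∅ := by
    rw [← Finset.card_eq_zero]
    have : ((T.filter fun e => ∀ i, ¬ R (s i) e).card : ℝ) < 1 := hs.trans_lt hlt
    have := Nat.cast_lt_one.1 this
    exact this
  refine ⟨m, fun i => (Finset.univ.filter fun a => (s i).1 a = 0) ×ˢ
    (Finset.univ.filter fun b => (s i).2 b = 0), ?_, ?_⟩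
  · have b1 : (m : ℝ) ≤ M * L + 1 := by
      rw [hm]; push_cast; linarith [Nat.floor_le (mul_nonneg hM0.le hL0)]
    have b2 : L ≤ 3 * ((k + l) * Real.log N) := by
      rw [hL, ← mul_assoc]; gcongr; linarith
    have b3 : 1 ≤ ((k : ℝ) + l) * Real.log N := by nlinarith
    have b4 : 1 ≤ (l * (k : ℝ) ^ 2) * (((k : ℝ) + l) * Real.log N) :=
      one_le_mul_of_one_le_of_one_le hlk b3
    have b5 : M * L ≤ M * (3 * ((k + l) * Real.log N)) := by gcongr
    calc (m : ℝ) ≤ M * (3 * ((k + l) * Real.log N)) + 1 := by linarith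
      _ ≤ 220 * ((l * (k : ℝ) ^ 2) * (((k : ℝ) + l) * Real.log N)) := by
        rw [hMdef]; linarith
      _ = _ := by ring
  · rintro Cl hCl c hc X hX hXc ⟨x, cx⟩ hx ⟨y, cy⟩ hy hyX
    obtain rfl : cx = c := hXc _ hx
    obtain rfl : cy = cx := hy
    have hmem : ∀ a, a ∈ X.image Prod.fst ↔ (a, cy) ∈ X := by
      intro a
      rw [Finset.mem_image]
      constructor
      · rintro ⟨⟨a', c'⟩, h, rfl⟩
        obtain rfl : c' = cy := hXc _ h
        exact h
      · exact fun h => ⟨_, h, rfl⟩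
    have hcardX : (X.image Prod.fst).card = k := by
      rw [← hX]
      refine Finset.card_image_of_injOn fun p hp q hq h => Prod.ext h ?_
      rw [hXc p hp, hXc q hq]
    have heT : ((Cl, cy, X.image Prod.fst, x, y) :
        Finset (Fin N) × Fin N × Finset (Fin N) × Fin N × Fin N) ∈ T := by
      simp only [T, Finset.mem_filter, Finset.mem_product, Finset.mem_powersetCard,
        Finset.mem_univ, Finset.subset_univ, true_and, and_true]
      exact ⟨⟨hCl, hcardX⟩, hc, (hmem x).2 hx, fun h => hyX ((hmem y).1 h)⟩
    obtain ⟨i, hi⟩ : ∃ i, R (s i) (Cl, cy, X.image Prod.fst, x, y) := by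
      by_contra hcon
      have : ((Cl, cy, X.image Prod.fst, x, y) :
        Finset (Fin N) × Fin N × Finset (Fin N) × Fin N × Fin N) ∈
          T.filter fun e => ∀ i, ¬ R (s i) e :=
        Finset.mem_filter.2 ⟨heT, fun i h => hcon ⟨i, h⟩⟩
      rw [hempty] at this
      exact Finset.notMem_empty _ this
    obtain ⟨⟨hxy, hXx⟩, hc0, hCl0⟩ := hi
    have hx0 : (s i).1 x = 0 := hxy x (by simp)
    have hy0 : (s i).1 y = 0 := hxy y (by simp)
    have hcy : (s i).2 cy = 0 := hc0 cy (by simp)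
    refine ⟨i, ?_, ?_, ?_⟩
    · ext ⟨a, b⟩
      simp only [Finset.mem_inter, Finset.mem_product, Finset.mem_filter, Finset.mem_univ,
        true_and, Finset.mem_singleton, Prod.mk.injEq]
      constructor
      · rintro ⟨⟨ha, -⟩, hab⟩
        obtain rfl : b = cy := hXc _ hab
        refine ⟨?_, rfl⟩
        by_contra hne
        exact hXx a (Finset.mem_erase.2 ⟨hne, (hmem a).2 hab⟩) ha
      · rintro ⟨rfl, rfl⟩
        exact ⟨⟨hx0, hcy⟩, hx⟩
    · simp [hy0, hcy]
    · rintro ⟨a, b⟩ hab hb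
      simp only [Finset.mem_product, Finset.mem_filter, Finset.mem_univ, true_and] at hab
      exact hCl0 b hb hab.2
end

section
/- For every real α > 2 there is a constant C (depending only on α) with the following property. Let T be a finite set of points in ℝ², let v be a point of ℝ², let P > 0, r > 0, let x be a positive integer, and let δ ∈ ℕ be such that every ball of radius r in ℝ² contains at most δ elements of T and every u ∈ T satisfies d(u,v) ≥ x·r. Then Σ_{u∈T} P·d(u,v)^{−α} ≤ C·P·δ·r^{−α}·x^{−(α−2)}. -/
/-!
The plane around `v` is cut into the dyadic annuli `2^k x r ≤ d(u,v) < 2^(k+1) x r`. A disc of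
radius `m r` meets at most `(2m+1)² ≤ 9m²` cells of a square grid of side `r`, and each cell lies
in a ball of radius `r`, so the disc contains at most `9m²δ` points of `T`
(`card_le_of_dist_le`). Hence the `k`-th annulus contributes at most
`36·4^k x² δ · P (2^k x r)^(-α)`, and the contributions decay geometrically with ratio
`q = 2^(-(α-2)) < 1`. The summation is carried out by peeling off the innermost annulus and
replacing `x` by `2x` (`sum_le_of_dist_lt`), with `C = 36 / (1 - q)` being the fixed point of
`C ↦ 36 + q C`.
-/

open scoped Classical

/-- Points of the Euclidean plane. -/
abbrev Pt := EuclideanSpace ℝ (Fin 2)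

/-- The area bound: a disc of radius `m r` holds at most `9 m² δ` points. The points are sorted
into the half-open cells of side `r` of a square grid with a vertex at `v`; the ball of radius `r`
about the centre of a cell contains the cell. -/
lemma card_le_of_dist_le (T : Finset Pt) (v : Pt) (r : ℝ) (m δ : ℕ) (hr : 0 < r) (hm : 1 ≤ m)
    (hδ : ∀ y : Pt, (T.filter (fun u => dist u y ≤ r)).card ≤ δ)
    (hT : ∀ u ∈ T, dist u v ≤ m * r) :
    T.card ≤ 9 * m ^ 2 * δ := by
  have key := Finset.card_le_mul_card_image_of_maps_to (s := T)
    (f := fun u : Pt => (⌊(u 0 - v 0) / r⌋, ⌊(u 1 - v 1) / r⌋))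
    (t := Finset.Icc (-(m : ℤ)) m ×ˢ Finset.Icc (-(m : ℤ)) m) ?_ δ ?_
  · rw [Finset.card_product, Int.card_Icc] at key
    have h3 : ((m : ℤ) + 1 - -(m : ℤ)).toNat ≤ 3 * m := by omega
    calc T.card ≤ _ := key
      _ ≤ δ * ((3 * m) * (3 * m)) := by gcongr
      _ = _ := by ring
  · have coord (u : Pt) (hu : u ∈ T) (i : Fin 2) :
        -(m : ℤ) ≤ ⌊(u i - v i) / r⌋ ∧ ⌊(u i - v i) / r⌋ ≤ m := by
      have h1 : |u i - v i| ≤ m * r := by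
        have := PiLp.norm_apply_le (u - v) i
        rw [← dist_eq_norm, PiLp.sub_apply, Real.norm_eq_abs] at this
        exact this.trans (hT u hu)
      obtain ⟨h2, h3⟩ := abs_le.1 h1
      constructor
      · rw [Int.le_floor, le_div_iff₀ hr]
        push_cast
        linarith
      · have h4 : (u i - v i) / r ≤ m := by rwa [div_le_iff₀ hr]
        have h5 : ((⌊(u i - v i) / r⌋ : ℤ) : ℝ) ≤ ((m : ℤ) : ℝ) := by
          rw [Int.cast_natCast]
          exact (Int.floor_le _).trans h4
        exact Int.cast_le.1 h5
    intro u hu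
    simp only [Finset.mem_product, Finset.mem_Icc]
    exact ⟨coord u hu 0, coord u hu 1⟩
  · rintro ⟨a, b⟩ -
    refine (Finset.card_le_card ?_).trans
      (hδ !₂[v 0 + (a + 1 / 2) * r, v 1 + (b + 1 / 2) * r])
    intro u hu
    simp only [Finset.mem_filter, Prod.mk.injEq, Int.floor_eq_iff, le_div_iff₀ hr,
      div_lt_iff₀ hr] at hu ⊢
    obtain ⟨hu, ⟨h1, h2⟩, h3, h4⟩ := hu
    refine ⟨hu, ?_⟩
    rw [EuclideanSpace.dist_eq, Real.sqrt_le_left hr.le]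
    simp only [Fin.sum_univ_two, Real.dist_eq, sq_abs]
    have e1 : (u 0 - (v 0 + (a + 1 / 2) * r)) ^ 2 ≤ (r / 2) ^ 2 :=
      sq_le_sq' (by linarith) (by linarith)
    have e2 : (u 1 - (v 1 + (b + 1 / 2) * r)) ^ 2 ≤ (r / 2) ^ 2 :=
      sq_le_sq' (by linarith) (by linarith)
    have : (u 0 - (v 0 + (a + 1 / 2) * r)) ^ 2 + (u 1 - (v 1 + (b + 1 / 2) * r)) ^ 2 ≤ r ^ 2 := by
      nlinarith [sq_nonneg r]
    simpa using this

/-- The estimate for sets spanning at most `n` dyadic annuli, with a constant independent of `n`;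
any `C` with `36 + C · 2^(-(α-2)) ≤ C` is stable under adding one annulus. -/
lemma sum_le_of_dist_lt (α C : ℝ) (hα : 2 < α) (hC0 : 0 < C)
    (hC : 36 + C * (2 : ℝ) ^ (-(α - 2)) ≤ C) (v : Pt) (P r : ℝ) (δ : ℕ)
    (hP : 0 < P) (hr : 0 < r) (n : ℕ) :
    ∀ (T : Finset Pt) (x : ℕ), 1 ≤ x →
      (∀ y : Pt, (T.filter (fun u => dist u y ≤ r)).card ≤ δ) →
      (∀ u ∈ T, (x : ℝ) * r ≤ dist u v) →
      (∀ u ∈ T, dist u v < 2 ^ n * (x * r)) →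
      ∑ u ∈ T, P * dist u v ^ (-α) ≤
        C * P * (δ : ℝ) * r ^ (-α) * (x : ℝ) ^ (-(α - 2)) := by
  induction n with
  | zero =>
    intro T x hx _ h1 h2
    have hT : T = ∅ := by
      refine Finset.eq_empty_of_forall_notMem fun u hu => ?_
      have := h1 u hu
      have := h2 u hu
      rw [pow_zero] at this
      linarith
    rw [hT, Finset.sum_empty]
    positivity
  | succ n ih =>
    intro T x hx hδ h1 h2
    have hx0 : (0 : ℝ) < x := by exact_mod_cast hx
    rw [← Finset.sum_filter_add_sum_filter_not T (fun u => dist u v < 2 * (x * r))]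
    have hsub (S : Finset Pt) (hS : S ⊆ T) (y : Pt) :
        (S.filter (fun u => dist u y ≤ r)).card ≤ δ :=
      (Finset.card_le_card (Finset.filter_subset_filter _ hS)).trans (hδ y)
    set S := T.filter (fun u => dist u v < 2 * (x * r)) with hSdef
    have hcard : (S.card : ℝ) ≤ 36 * (x : ℝ) ^ 2 * δ := by
      have := card_le_of_dist_le S v r (2 * x) δ hr (by omega)
        (hsub S (Finset.filter_subset _ _)) (fun u hu => by
          have := (Finset.mem_filter.1 hu).2
          push_cast
          linarith)
      calc (S.card : ℝ) ≤ ((9 * (2 * x) ^ 2 * δ : ℕ) : ℝ) := by exact_mod_cast this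
        _ = _ := by push_cast; ring
    have near : ∑ u ∈ S, P * dist u v ^ (-α) ≤
        36 * (P * δ * r ^ (-α) * (x : ℝ) ^ (-(α - 2))) := by
      have hterm : ∀ u ∈ S, P * dist u v ^ (-α) ≤ P * ((x : ℝ) * r) ^ (-α) := by
        intro u hu
        refine mul_le_mul_of_nonneg_left ?_ hP.le
        exact Real.rpow_le_rpow_of_nonpos (by positivity)
          (h1 u (Finset.mem_filter.1 hu).1) (by linarith)
      have hxpow : (x : ℝ) ^ (-(α - 2)) = (x : ℝ) ^ 2 * (x : ℝ) ^ (-α) := by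
        rw [← Real.rpow_natCast, ← Real.rpow_add hx0]
        congr 1
        push_cast
        ring
      calc ∑ u ∈ S, P * dist u v ^ (-α) ≤ S.card • (P * ((x : ℝ) * r) ^ (-α)) :=
            Finset.sum_le_card_nsmul _ _ _ hterm
        _ ≤ (36 * (x : ℝ) ^ 2 * δ) * (P * ((x : ℝ) * r) ^ (-α)) := by
            rw [nsmul_eq_mul]
            gcongr
        _ = _ := by
            rw [hxpow, Real.mul_rpow hx0.le hr.le]
            ring
    have far := ih (T.filter (fun u => ¬ dist u v < 2 * (x * r))) (2 * x) (by omega)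
      (hsub _ (Finset.filter_subset _ _))
      (fun u hu => by
        have := not_lt.1 (Finset.mem_filter.1 hu).2
        push_cast
        linarith)
      (fun u hu => by
        have := h2 u (Finset.mem_filter.1 hu).1
        push_cast
        rw [pow_succ] at this
        linarith)
    rw [Nat.cast_mul, Real.mul_rpow (by positivity) hx0.le, Nat.cast_ofNat] at far
    have hpos : 0 ≤ P * δ * r ^ (-α) * (x : ℝ) ^ (-(α - 2)) := by positivity
    have := mul_le_mul_of_nonneg_right hC hpos
    linarith

/-- For every real `α > 2` there is a constant `C` (depending only on `α`)
with the following property. Let `T` be a finite set of points in `ℝ²`, `v` a point, `P > 0`,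
`r > 0`, `x ≥ 1` an integer, and `δ ∈ ℕ` such that every ball of radius `r` contains at most
`δ` elements of `T` and every `u ∈ T` satisfies `d(u,v) ≥ x·r`. Then
`Σ_{u∈T} P·d(u,v)^{−α} ≤ C·P·δ·r^{−α}·x^{−(α−2)}`. -/
theorem interference_estimate (α : ℝ) (hα : 2 < α) :
    ∃ C : ℝ, 0 < C ∧
      ∀ (T : Finset Pt) (v : Pt) (P r : ℝ) (x δ : ℕ),
        0 < P → 0 < r → 1 ≤ x →
        (∀ y : Pt, (T.filter (fun u => dist u y ≤ r)).card ≤ δ) →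
        (∀ u ∈ T, (x : ℝ) * r ≤ dist u v) →
        ∑ u ∈ T, P * dist u v ^ (-α) ≤
          C * P * (δ : ℝ) * r ^ (-α) * (x : ℝ) ^ (-(α - 2)) := by
  have hq : (2 : ℝ) ^ (-(α - 2)) < 1 :=
    Real.rpow_lt_one_of_one_lt_of_neg (by norm_num) (by linarith)
  have hq' : 0 < 1 - (2 : ℝ) ^ (-(α - 2)) := by linarith
  refine ⟨36 / (1 - (2 : ℝ) ^ (-(α - 2))), by positivity, ?_⟩
  intro T v P r x δ hP hr hx hδ h1
  have hx0 : (0 : ℝ) < x := by exact_mod_cast hx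
  have hxr : 0 < (x : ℝ) * r := by positivity
  -- `T` is finite, so it spans finitely many dyadic annuli.
  obtain ⟨n, hn⟩ := pow_unbounded_of_one_lt ((∑ u ∈ T, dist u v) / (x * r))
    (one_lt_two : (1 : ℝ) < 2)
  refine sum_le_of_dist_lt α _ hα (by positivity) (le_of_eq ?_) v P r δ hP hr n T x hx hδ h1 ?_
  · have := hq'.ne'
    field_simp
    ring
  · intro u hu
    rw [div_lt_iff₀ hxr] at hn
    exact (Finset.single_le_sum (f := fun u => dist u v) (fun _ _ => dist_nonneg) hu).trans_lt hn
end

section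
/- For every ε ∈ (0,1) there exist constants c₁, c₂ > 0 (depending only on ε) such that for every nonempty finite set V ⊂ ℝ², if Δ_V denotes the maximal degree of the communication graph of V and D(V) denotes the density of V, then c₁·(Δ_V + 1) ≤ D(V) ≤ c₂·(Δ_V + 1). -/
/-!
The two quantities count points of `V` in balls of comparable radii.

A node together with its neighbours lies in a ball of radius `1 - ε ≤ 1`, which gives
`Δ_V + 1 ≤ D(V)`.

Conversely, by compactness a closed unit ball is covered by some number `N = N(ε)` of open balls of
radius `(1 - ε) / 2`, and `N` does not depend on the centre, by translation. Points of `V` in one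
small ball are pairwise at distance at most `1 - ε`, so they form a clique of the communication
graph and there are at most `Δ_V + 1` of them. Hence `D(V) ≤ N (Δ_V + 1)`.
-/

open scoped Classical

/-- Degree of a node `v` in the communication graph of `V` with connectivity parameter `ε`:
the number of other points of `V` at distance at most `1 − ε` from `v`. -/
noncomputable def commDegree (V : Finset Pt) (ε : ℝ) (v : Pt) : ℕ :=
  (V.filter (fun u => u ≠ v ∧ dist u v ≤ 1 - ε)).card

/-- Maximal degree of the communication graph of `V`. -/
noncomputable def maxDegree (V : Finset Pt) (ε : ℝ) : ℕ :=
  V.sup (commDegree V ε)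

/-- The density of an (unclustered) finite set `V ⊂ ℝ²`: the largest number of points of `V`
contained in a single ball of radius `1`. -/
noncomputable def density (V : Finset Pt) : ℕ :=
  sSup {n : ℕ | ∃ x : Pt, n = (V.filter (fun p => dist p x ≤ 1)).card}

/-- The supremum defining `density` is over a set bounded by `V.card`, so it is not a junk value. -/
lemma card_filter_le_density (V : Finset Pt) (x : Pt) :
    (V.filter (fun p => dist p x ≤ 1)).card ≤ density V := by
  refine le_csSup ⟨V.card, ?_⟩ ⟨x, rfl⟩
  rintro n ⟨y, rfl⟩
  exact Finset.card_filter_le _ _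

lemma density_le {V : Finset Pt} {m : ℕ}
    (h : ∀ x : Pt, (V.filter (fun p => dist p x ≤ 1)).card ≤ m) : density V ≤ m := by
  refine csSup_le ⟨_, 0, rfl⟩ ?_
  rintro n ⟨y, rfl⟩
  exact h y

lemma maxDegree_add_one_le_density {ε : ℝ} (hε : 0 ≤ ε) {V : Finset Pt}
    (hV : V.Nonempty) : maxDegree V ε + 1 ≤ density V := by
  obtain ⟨v, hv, hmax⟩ := Finset.exists_mem_eq_sup V hV (commDegree V ε)
  have hnot : v ∉ V.filter (fun u => u ≠ v ∧ dist u v ≤ 1 - ε) := by simp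
  calc maxDegree V ε + 1
      = (insert v (V.filter (fun u => u ≠ v ∧ dist u v ≤ 1 - ε))).card := by
        rw [Finset.card_insert_of_notMem hnot, maxDegree, hmax, commDegree]
    _ ≤ (V.filter (fun p => dist p v ≤ 1)).card := by
        refine Finset.card_le_card fun u hu => ?_
        rw [Finset.mem_insert, Finset.mem_filter] at hu
        rw [Finset.mem_filter]
        rcases hu with rfl | ⟨hu, -, hd⟩
        · exact ⟨hv, by simp⟩
        · exact ⟨hu, by linarith⟩
    _ ≤ density V := card_filter_le_density V v

/-- A clique of the communication graph has at most `Δ_V + 1` points. -/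
lemma card_le_maxDegree_add_one {ε : ℝ} {V S : Finset Pt} (hS : S ⊆ V)
    (h : ∀ p ∈ S, ∀ q ∈ S, dist p q ≤ 1 - ε) : S.card ≤ maxDegree V ε + 1 := by
  rcases S.eq_empty_or_nonempty with rfl | ⟨q, hq⟩
  · simp
  have hsub : S ⊆ insert q (V.filter (fun u => u ≠ q ∧ dist u q ≤ 1 - ε)) := by
    intro p hp
    rw [Finset.mem_insert, Finset.mem_filter]
    by_cases hpq : p = q
    · exact Or.inl hpq
    · exact Or.inr ⟨hS hp, hpq, h p hp q hq⟩
  calc S.card ≤ commDegree V ε q + 1 :=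
        (Finset.card_le_card hsub).trans (Finset.card_insert_le _ _)
    _ ≤ maxDegree V ε + 1 :=
        Nat.add_le_add_right (Finset.le_sup (f := commDegree V ε) (hS hq)) 1

lemma exists_finset_cover_closedBall {r : ℝ} (hr : 0 < r) :
    ∃ T : Finset Pt, ∀ y : Pt, ‖y‖ ≤ 1 → ∃ t ∈ T, dist y t < r := by
  obtain ⟨T, -, hT, hcover⟩ := (isCompact_closedBall (0 : Pt) 1).finite_cover_balls hr
  refine ⟨hT.toFinset, fun y hy => ?_⟩
  obtain ⟨t, ht, hyt⟩ := Set.mem_iUnion₂.mp (hcover (mem_closedBall_zero_iff.mpr hy))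
  exact ⟨t, hT.mem_toFinset.mpr ht, hyt⟩

/-- A cover `T` of the unit ball at the origin by balls of radius `(1 - ε) / 2`, translated to the
centre `x`, splits the points of `V` in the unit ball at `x` into `T.card` cliques. -/
lemma density_le_card_mul {ε : ℝ} {T : Finset Pt}
    (hT : ∀ y : Pt, ‖y‖ ≤ 1 → ∃ t ∈ T, dist y t < (1 - ε) / 2) (V : Finset Pt) :
    density V ≤ T.card * (maxDegree V ε + 1) := by
  refine density_le fun x => ?_
  have hsub : V.filter (fun p => dist p x ≤ 1) ⊆
      T.biUnion (fun t => V.filter (fun p => dist (p - x) t < (1 - ε) / 2)) := by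
    intro p hp
    obtain ⟨hpV, hpx⟩ := Finset.mem_filter.mp hp
    obtain ⟨t, ht, hpt⟩ := hT (p - x) (by rwa [← dist_eq_norm])
    exact Finset.mem_biUnion.mpr ⟨t, ht, Finset.mem_filter.mpr ⟨hpV, hpt⟩⟩
  refine (Finset.card_le_card hsub).trans (Finset.card_biUnion_le_card_mul _ _ _ fun t _ => ?_)
  refine card_le_maxDegree_add_one (Finset.filter_subset _ _) fun p hp q hq => ?_
  have hp' := (Finset.mem_filter.mp hp).2
  have hq' := (Finset.mem_filter.mp hq).2
  have htri := dist_triangle_right (p - x) (q - x) t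
  rw [dist_sub_right] at htri
  linarith

/-- For every `ε ∈ (0,1)` there exist constants `c₁, c₂ > 0` (depending only
on `ε`) such that for every nonempty finite set `V ⊂ ℝ²`, if `Δ_V` denotes the maximal degree
of the communication graph of `V` and `D(V)` the density of `V`, then
`c₁·(Δ_V + 1) ≤ D(V) ≤ c₂·(Δ_V + 1)`. -/
theorem density_vs_maxDegree (ε : ℝ) (hε₀ : 0 < ε) (hε₁ : ε < 1) :
    ∃ c₁ c₂ : ℝ, 0 < c₁ ∧ 0 < c₂ ∧
      ∀ V : Finset Pt, V.Nonempty →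
        c₁ * ((maxDegree V ε : ℝ) + 1) ≤ (density V : ℝ) ∧
        (density V : ℝ) ≤ c₂ * ((maxDegree V ε : ℝ) + 1) := by
  obtain ⟨T, hT⟩ := exists_finset_cover_closedBall (r := (1 - ε) / 2) (by linarith)
  -- The `+ 1` makes the constant visibly positive, without proving that `T` is nonempty.
  refine ⟨1, T.card + 1, one_pos, by positivity, fun V hV => ⟨?_, ?_⟩⟩
  · rw [one_mul]
    exact_mod_cast maxDegree_add_one_le_density hε₀.le hV
  · have h : density V ≤ (T.card + 1) * (maxDegree V ε + 1) :=
      (density_le_card_mul hT V).trans (Nat.mul_le_mul_right _ (Nat.le_succ _))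
    exact_mod_cast h
end

section
/- For every ε ∈ (0,1) there exist constants c₁, c₂ > 0 (depending only on ε) such that for every r ∈ [1,2] and every nonempty finite r-clustered set V ⊂ ℝ² (with connectivity parameter ε), if Δ_V denotes the maximal degree of the communication graph of V and M(V) denotes the maximal number of nodes in a single cluster, then c₁·(Δ_V + 1) ≤ M(V) ≤ c₂·(Δ_V + 1). -/
/-!
The statement is a packing argument. Put `s = 1 - ε`. By total boundedness, a ball of radius `4`
is covered by `K` balls of radius `s / 3`, with `K` depending only on `ε`, so a finite set in such
a ball with at most `n` points in each `s`-neighbourhood of its own points has at most `n * K`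
points (`exists_packing_const`).

* Upper bound: a cluster lies in a ball of radius `2`, and each of its points has at most
  `Δ + 1` points (itself and its neighbours) within distance `s`, so the cluster has at most
  `(Δ + 1) * K` points.
* Lower bound: let `v` have maximal degree. The clusters meeting the closed neighbourhood of `v`
  have their centers within `s + r ≤ 4` of `v`, and these centers are `s`-separated, so at most
  `K` clusters share the `Δ + 1` points of this neighbourhood, and each holds at most `M` of them.
-/

open scoped Classical

/-- An `r`-clustering of the finite set `V` with connectivity parameter `ε`: the function `cl`
assigns to each node a cluster ID, each cluster `c` has a center (a node of cluster `c`) such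
that all nodes of cluster `c` lie in the ball of radius `r` around it, and centers of distinct
clusters are at mutual distance at least `1 − ε`. -/
def IsRClustering (V : Finset Pt) (cl : Pt → ℕ) (center : ℕ → Pt) (r ε : ℝ) : Prop :=
  (∀ c ∈ V.image cl, center c ∈ V ∧ cl (center c) = c ∧
    ∀ y ∈ V, cl y = c → dist y (center c) ≤ r) ∧
  (∀ c₁ ∈ V.image cl, ∀ c₂ ∈ V.image cl, c₁ ≠ c₂ →
    1 - ε ≤ dist (center c₁) (center c₂))

/-- The maximal number of nodes of `V` in a single cluster of the clustering `cl`. -/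
noncomputable def clusterMax (V : Finset Pt) (cl : Pt → ℕ) : ℕ :=
  (V.image cl).sup (fun c => (V.filter (fun p => cl p = c)).card)

/-- Packing bound, uniform in the center `x` of the ball: the covering of the ball of radius `4`
around `0` is translated to `x`, and two points in one covering ball are at distance `< s`. -/
theorem exists_packing_const {s : ℝ} (hs : 0 < s) :
    ∃ K : ℕ, 0 < K ∧ ∀ (W : Finset Pt) (x : Pt) (n : ℕ), (∀ y ∈ W, dist y x ≤ 4) →
      (∀ y ∈ W, (W.filter (fun u => dist u y < s)).card ≤ n) → W.card ≤ n * K := by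
  have htb : TotallyBounded (Metric.closedBall (0 : Pt) 4) :=
    (isCompact_closedBall _ _).totallyBounded
  obtain ⟨t, htf, ht⟩ := Metric.totallyBounded_iff.1 htb (s / 3) (by positivity)
  refine ⟨htf.toFinset.card + 1, Nat.succ_pos _, fun W x n hW hn => ?_⟩
  have hcov : ∀ y ∈ W, ∃ z ∈ t, dist (y - x) z < s / 3 := by
    intro y hy
    have hmem : y - x ∈ Metric.closedBall (0 : Pt) 4 := by
      simpa [dist_eq_norm] using hW y hy
    simpa using ht hmem
  choose! f hft hfd using hcov
  have hcard : W.card ≤ n * htf.toFinset.card := by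
    refine Finset.card_le_mul_card_image_of_maps_to (f := f)
      (fun y hy => htf.mem_toFinset.2 (hft y hy)) n fun z _ => ?_
    rcases (W.filter (fun y => f y = z)).eq_empty_or_nonempty with h | ⟨y, hy⟩
    · simp [h]
    · obtain ⟨hyW, hyz⟩ := Finset.mem_filter.1 hy
      refine (Finset.card_le_card fun u hu => ?_).trans (hn y hyW)
      obtain ⟨huW, huz⟩ := Finset.mem_filter.1 hu
      refine Finset.mem_filter.2 ⟨huW, ?_⟩
      have h1 := hfd u huW
      have h2 := hfd y hyW
      rw [huz] at h1
      rw [hyz] at h2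
      have h3 := dist_triangle_right (u - x) (y - x) z
      rw [dist_sub_right] at h3
      linarith
  exact hcard.trans (Nat.mul_le_mul_left _ (Nat.le_succ _))

/-- The closed neighbourhood of a node has one point more than its degree. -/
theorem card_closedNhd {V : Finset Pt} {ε : ℝ} (hε₁ : ε < 1) {v : Pt} (hv : v ∈ V) :
    (V.filter (fun u => dist u v ≤ 1 - ε)).card = commDegree V ε v + 1 := by
  have h : V.filter (fun u => dist u v ≤ 1 - ε) =
      insert v (V.filter (fun u => u ≠ v ∧ dist u v ≤ 1 - ε)) := by
    ext u
    by_cases huv : u = v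
    · subst huv
      simp [hv, hε₁.le]
    · simp [huv]
  rw [h, Finset.card_insert_of_notMem (by simp), commDegree]

/-- For every `ε ∈ (0,1)` there exist constants `c₁, c₂ > 0` (depending only
on `ε`) such that for every `r ∈ [1,2]` and every nonempty finite `r`-clustered set `V ⊂ ℝ²`
(with connectivity parameter `ε`), if `Δ_V` denotes the maximal degree of the communication
graph of `V` and `M(V)` the maximal number of nodes in a single cluster, then
`c₁·(Δ_V + 1) ≤ M(V) ≤ c₂·(Δ_V + 1)`. -/
theorem clusterMax_vs_maxDegree (ε : ℝ) (hε₀ : 0 < ε) (hε₁ : ε < 1) :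
    ∃ c₁ c₂ : ℝ, 0 < c₁ ∧ 0 < c₂ ∧
      ∀ r : ℝ, 1 ≤ r → r ≤ 2 →
        ∀ (V : Finset Pt) (cl : Pt → ℕ) (center : ℕ → Pt),
          V.Nonempty → IsRClustering V cl center r ε →
          c₁ * ((maxDegree V ε : ℝ) + 1) ≤ (clusterMax V cl : ℝ) ∧
          (clusterMax V cl : ℝ) ≤ c₂ * ((maxDegree V ε : ℝ) + 1) := by
  obtain ⟨K, hK, hpack⟩ := exists_packing_const (sub_pos.2 hε₁)
  have hK' : (0 : ℝ) < K := Nat.cast_pos.2 hK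
  refine ⟨1 / K, K, by positivity, hK', fun r _ hr2 V cl center hV hcl => ?_⟩
  obtain ⟨hball, hsep⟩ := hcl
  constructor
  · obtain ⟨v, hv, hvmax⟩ := Finset.exists_mem_eq_sup V hV (commDegree V ε)
    set N := V.filter (fun u => dist u v ≤ 1 - ε) with hN
    have hNV : N ⊆ V := Finset.filter_subset _ _
    have hNcard : N.card = maxDegree V ε + 1 := by
      rw [hN, card_closedNhd hε₁ hv, maxDegree, hvmax]
    have hid : ∀ c ∈ N.image cl, c ∈ V.image cl := fun c hc =>
      Finset.image_subset_image hNV hc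
    have hinj : Set.InjOn center (N.image cl) := by
      intro a ha b hb hab
      rw [← (hball a (hid a ha)).2.1, hab, (hball b (hid b hb)).2.1]
    have hclusters : (N.image cl).card ≤ K := by
      rw [← Finset.card_image_of_injOn hinj, ← one_mul K]
      refine hpack _ v 1 ?_ ?_
      · intro y hy
        obtain ⟨c, hc, rfl⟩ := Finset.mem_image.1 hy
        obtain ⟨u, hu, rfl⟩ := Finset.mem_image.1 hc
        have h1 := (hball _ (hid _ hc)).2.2 u (hNV hu) rfl
        have h2 := (Finset.mem_filter.1 hu).2
        have h3 := dist_triangle_left (center (cl u)) v u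
        linarith
      · intro y hy
        obtain ⟨b, hb, rfl⟩ := Finset.mem_image.1 hy
        refine Finset.card_le_one.2 ?_
        have key : ∀ p ∈ ((N.image cl).image center).filter
            (fun u => dist u (center b) < 1 - ε), p = center b := by
          intro p hp
          obtain ⟨hp1, hp2⟩ := Finset.mem_filter.1 hp
          obtain ⟨a, ha, rfl⟩ := Finset.mem_image.1 hp1
          by_contra hne
          have hab : a ≠ b := fun h => hne (by rw [h])
          exact absurd hp2 (not_lt.2 (hsep a (hid a ha) b (hid b hb) hab))
        intro p hp q hq
        rw [key p hp, key q hq]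
    have hfib : N.card ≤ clusterMax V cl * (N.image cl).card := by
      refine Finset.card_le_mul_card_image N _ fun c hc => ?_
      refine (Finset.card_le_card (Finset.filter_subset_filter _ hNV)).trans ?_
      exact Finset.le_sup (f := fun c => (V.filter (fun p => cl p = c)).card) (hid c hc)
    have hle : maxDegree V ε + 1 ≤ clusterMax V cl * K :=
      hNcard ▸ hfib.trans (Nat.mul_le_mul_left _ hclusters)
    rw [one_div_mul_eq_div, div_le_iff₀ hK']
    exact_mod_cast hle
  · have hle : clusterMax V cl ≤ (maxDegree V ε + 1) * K := by
      refine Finset.sup_le fun c hc => ?_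
      refine hpack _ (center c) _ (fun y hy => ?_) fun y hy => ?_
      · obtain ⟨hyV, hyc⟩ := Finset.mem_filter.1 hy
        exact ((hball c hc).2.2 y hyV hyc).trans (by linarith)
      · have hyV := (Finset.mem_filter.1 hy).1
        have hdeg : commDegree V ε y ≤ maxDegree V ε := Finset.le_sup hyV
        refine le_trans ?_ (Nat.succ_le_succ hdeg)
        rw [Nat.succ_eq_add_one, ← card_closedNhd hε₁ hyV]
        refine Finset.card_le_card fun u hu => ?_
        obtain ⟨hu1, hu2⟩ := Finset.mem_filter.1 hu
        exact Finset.mem_filter.2 ⟨(Finset.mem_filter.1 hu1).1, hu2.le⟩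
    rw [mul_comm]
    exact_mod_cast hle
end

section
/- Fix a path-loss α > 2, a threshold β > 1, a noise 𝒩 > 0, power P = 𝒩·β, and ε ∈ (0,1). There exists a constant κ ∈ ℕ (depending only on α, β, ε) with the following property. Let Γ > 0 and let A ⊂ ℝ² be a finite set of density at most Γ, and let u,v ∈ A be a close pair (with density parameter Γ and connectivity parameter ε). Then there exists a set A' ⊆ A with u,v ∈ A' and |A'| ≤ κ such that for every finite set T ⊆ A of transmitters with u ∈ T and T ∩ A' = {u}, one has SINR(u, v, T) ≥ β, i.e., v receives the message transmitted by u. -/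
/-!
Write `D = dist u v`, `d = dCrit Γ 1`, so `D = ζ d` with `ζ ≤ 1`. The heart of the matter is that
around `v` the set `A` has quadratic growth at scale `D`, with an absolute constant:
`#(A ∩ B(v, r)) ≤ 8192 (r / D)²` for every `r ≥ D` (`card_ball_le`). There are three ranges.
For `r ≤ ζ` the points are `D / 2`-separated, so a packing bound applies.
For `r ≥ ζ` the density hypothesis is used together with `Γ ≤ 512 / d²` (`Gamma_le`), which holds
because `Γ / 2` is at most the packing number of the unit ball at a separation close to `d`:
for `ζ ≤ r ≤ 1` this gives `512 / d² ≤ 512 (r / D)²`, and for `r ≥ 1` a cover of `B(v, r)` by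
`O(r²)` unit balls gives `O(r² / d²)`, where `D ≤ d`.
Both the packing bound and the covering bound are instances of one counting argument with a square
grid (`card_le_grid`).

With quadratic growth and `α > 2`, a dyadic decomposition bounds `∑ (D / dist w v) ^ α` over the
points farther than `2 ^ m D` from `v` by a constant times `q ^ m`, where `q = 4 * 2 ^ (-α) < 1`
(`sum_far_le`). As `D ≤ 1 - ε`, reception only requires this sum to be at most
`(1 - (1 - ε) ^ α) / β`, so a suitable `m` depending on `α, β, ε` alone works, with
`A' = A ∩ B(v, 2 ^ m D)` and `κ = 8192 * 4 ^ m`.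
-/


open scoped Classical

/-- `chi r₁ r₂` is the maximal cardinality of a set of points contained in some ball of
radius `r₁` in the plane, all of whose pairwise distances are at least `r₂`. -/
noncomputable def chi (r₁ r₂ : ℝ) : ℕ :=
  sSup {n : ℕ | ∃ (S : Finset Pt) (x : Pt), S.card = n ∧
    (∀ p ∈ S, dist p x ≤ r₁) ∧ ∀ p ∈ S, ∀ q ∈ S, p ≠ q → r₂ ≤ dist p q}

/-- `dCrit Γ r = sup {d > 0 : chi r d ≥ Γ/2}`: the critical distance `d_{Γ,r}` of the paper. -/
noncomputable def dCrit (Γ r : ℝ) : ℝ :=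
  sSup {d : ℝ | 0 < d ∧ Γ / 2 ≤ (chi r d : ℝ)}

/-- `u, w ∈ X` form a close pair of the (unclustered) set `X` with density parameter `Γ` and
connectivity parameter `ε`: (b) `d(u,w) = ζ·d_{Γ,1} ≤ 1−ε` for some `ζ ∈ (0,1]`;
(c) every other point of `X` is at distance `≥ d(u,w)` from both `u` and `w`;
(d) any two distinct points of `X` lying in `B(u,ζ) ∪ B(w,ζ)` are at distance
`≥ d(u,w)/2` from each other. -/
def ClosePair (X : Finset Pt) (Γ ε : ℝ) (u w : Pt) : Prop :=
  u ∈ X ∧ w ∈ X ∧ u ≠ w ∧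
  ∃ ζ : ℝ, 0 < ζ ∧ ζ ≤ 1 ∧
    dist u w = ζ * dCrit Γ 1 ∧ dist u w ≤ 1 - ε ∧
    (∀ x ∈ X, x ≠ u → x ≠ w → dist u w ≤ dist u x ∧ dist u w ≤ dist w x) ∧
    (∀ u' ∈ X, ∀ w' ∈ X, u' ≠ w' →
      (dist u' u ≤ ζ ∨ dist u' w ≤ ζ) → (dist w' u ≤ ζ ∨ dist w' w ≤ ζ) →
      dist u w / 2 ≤ dist u' w')

/-- `sinr α P noise v u T` is the SINR at the point `u` of the transmission of `v`, when the
set of concurrent transmitters is `T`. -/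
noncomputable def sinr (α P noise : ℝ) (v u : Pt) (T : Finset Pt) : ℝ :=
  (P * dist v u ^ (-α)) / (noise + ∑ w ∈ T.erase v, P * dist w u ^ (-α))

/-! ### Grid counting and packing -/

/-- If every ball of radius `l` contains at most `M` points of `S`, then a finite set `S` inside a
ball of radius `r` has at most `M (2r/l + 2)²` points: a square of side `l` lies in the ball of
radius `l` around its centre, and at most `(2r/l + 2)²` squares of the grid meet the big ball. -/
lemma card_le_grid (S : Finset Pt) (x : Pt) (r l M : ℝ) (hr : 0 ≤ r) (hl : 0 < l) (hM : 0 ≤ M)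
    (hS : ∀ p ∈ S, dist p x ≤ r)
    (hc : ∀ y : Pt, ((S.filter (fun p => dist p y ≤ l)).card : ℝ) ≤ M) :
    (S.card : ℝ) ≤ M * (2 * r / l + 2) ^ 2 := by
  have hcoord : ∀ p ∈ S, ∀ i, |p i - x i| ≤ r := by
    intro p hp i
    have h1 := EuclideanSpace.dist_eq p x
    have h2 := hS p hp
    have h3 : |p i - x i| ≤ ‖p - x‖ := by
      simpa using PiLp.norm_apply_le (p - x) i
    rw [← dist_eq_norm] at h3
    linarith
  let cell : Pt → ℤ × ℤ := fun p => (⌊(p 0 - x 0) / l⌋, ⌊(p 1 - x 1) / l⌋)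
  set I : Finset ℤ := Finset.Icc ⌊-(r / l)⌋ ⌊r / l⌋ with hI
  have hmaps : ∀ p ∈ S, cell p ∈ I ×ˢ I := by
    intro p hp
    have key : ∀ i, ⌊(p i - x i) / l⌋ ∈ I := by
      intro i
      have h := abs_le.mp (hcoord p hp i)
      rw [hI, Finset.mem_Icc]
      refine ⟨Int.floor_le_floor ?_, Int.floor_le_floor ?_⟩
      · rw [← neg_div]; gcongr; exact h.1
      · gcongr; exact h.2
    exact Finset.mem_product.mpr ⟨key 0, key 1⟩
  have hIcard : (I.card : ℝ) ≤ 2 * r / l + 2 := by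
    have hrl : 0 ≤ r / l := by positivity
    have h0 : ⌊-(r / l)⌋ ≤ ⌊r / l⌋ + 1 := by
      have := Int.floor_le_floor (show -(r / l) ≤ r / l by linarith)
      linarith
    have h1 : ((I.card : ℤ) : ℝ) = (⌊r / l⌋ : ℝ) + 1 - ⌊-(r / l)⌋ := by
      rw [hI, Int.card_Icc, Int.toNat_of_nonneg (by linarith)]
      push_cast; ring
    have h2 := Int.floor_le (r / l)
    have h3 := Int.lt_floor_add_one (-(r / l))
    have h4 : 2 * r / l = r / l + r / l := by ring
    rw [Int.cast_natCast] at h1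
    rw [h1, h4]; linarith
  have hfib : ∀ z ∈ I ×ˢ I, ((S.filter (fun p => cell p = z)).card : ℝ) ≤ M := by
    rintro ⟨a, b⟩ -
    let y : Pt := !₂[x 0 + l * (a + 1 / 2), x 1 + l * (b + 1 / 2)]
    refine le_trans ?_ (hc y)
    norm_cast
    refine Finset.card_le_card fun p hp => ?_
    rw [Finset.mem_filter] at hp ⊢
    refine ⟨hp.1, ?_⟩
    have hcell := hp.2
    simp only [cell, Prod.mk.injEq] at hcell
    have key : ∀ (t : ℝ) (n : ℤ), ⌊t / l⌋ = n → (t - l * (n + 1 / 2)) ^ 2 ≤ l ^ 2 / 4 := by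
      intro t n h
      rw [Int.floor_eq_iff, le_div_iff₀ hl, div_lt_iff₀ hl] at h
      have : |t - l * (n + 1 / 2)| ≤ l / 2 := by
        rw [abs_le]; constructor <;> linarith
      have h2 := sq_le_sq' (abs_le.mp this).1 (abs_le.mp this).2
      linarith [h2, show (l / 2) ^ 2 = l ^ 2 / 4 by ring]
    have ha := key _ _ hcell.1
    have hb := key _ _ hcell.2
    rw [EuclideanSpace.dist_eq, Fin.sum_univ_two]
    apply Real.sqrt_le_iff.mpr ⟨hl.le, ?_⟩
    simp only [Real.dist_eq, sq_abs]
    have e0 : y 0 = x 0 + l * (a + 1 / 2) := by simp [y]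
    have e1 : y 1 = x 1 + l * (b + 1 / 2) := by simp [y]
    rw [e0, e1, ← sub_sub, ← sub_sub]
    nlinarith [sq_nonneg l]
  have hsum : (S.card : ℝ) = ∑ z ∈ I ×ˢ I, ((S.filter (fun p => cell p = z)).card : ℝ) := by
    rw [Finset.card_eq_sum_card_fiberwise hmaps]; push_cast; rfl
  rw [hsum]
  calc ∑ z ∈ I ×ˢ I, ((S.filter (fun p => cell p = z)).card : ℝ)
      ≤ ∑ z ∈ I ×ˢ I, M := Finset.sum_le_sum hfib
    _ = M * (I.card : ℝ) ^ 2 := by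
        rw [Finset.sum_const, Finset.card_product, nsmul_eq_mul]; push_cast; ring
    _ ≤ M * (2 * r / l + 2) ^ 2 := by gcongr

/-- Packing bound: an instance of the grid bound, as a ball of radius `s / 3` contains at most one
point of an `s`-separated set. -/
lemma card_le_packing (S : Finset Pt) (x : Pt) (r s : ℝ) (hr : 0 ≤ r) (hs : 0 < s)
    (hS : ∀ p ∈ S, dist p x ≤ r) (hsep : ∀ p ∈ S, ∀ q ∈ S, p ≠ q → s ≤ dist p q) :
    (S.card : ℝ) ≤ (6 * r / s + 2) ^ 2 := by
  have h := card_le_grid S x r (s / 3) 1 hr (by positivity) zero_le_one hS (by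
    intro y
    norm_cast
    rw [Finset.card_le_one]
    intro p hp q hq
    rw [Finset.mem_filter] at hp hq
    by_contra hne
    have := hsep p hp.1 q hq.1 hne
    have := dist_triangle_right p q y
    linarith [hp.2, hq.2])
  have e : 2 * r / (s / 3) = 6 * r / s := by field_simp; ring
  rwa [e, one_mul] at h

/-! ### The density parameter and the critical distance -/

lemma chi_one_bddAbove {s : ℝ} (hs : 0 < s) :
    BddAbove {n : ℕ | ∃ (S : Finset Pt) (x : Pt), S.card = n ∧
      (∀ p ∈ S, dist p x ≤ 1) ∧ ∀ p ∈ S, ∀ q ∈ S, p ≠ q → s ≤ dist p q} := by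
  refine ⟨⌊(6 * 1 / s + 2) ^ 2⌋₊, ?_⟩
  rintro n ⟨S, x, rfl, h1, h2⟩
  exact Nat.le_floor (card_le_packing S x 1 s zero_le_one hs h1 h2)

lemma one_le_chi_one {s : ℝ} (hs : 0 < s) : 1 ≤ chi 1 s := by
  apply le_csSup (chi_one_bddAbove hs)
  exact ⟨{0}, 0, by simp, by simp, by simp⟩

lemma chi_one_attained {s : ℝ} (hs : 0 < s) :
    ∃ (S : Finset Pt) (x : Pt), S.card = chi 1 s ∧
      (∀ p ∈ S, dist p x ≤ 1) ∧ ∀ p ∈ S, ∀ q ∈ S, p ≠ q → s ≤ dist p q :=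
  Nat.sSup_mem (s := {n : ℕ | ∃ (S : Finset Pt) (x : Pt), S.card = n ∧
      (∀ p ∈ S, dist p x ≤ 1) ∧ ∀ p ∈ S, ∀ q ∈ S, p ≠ q → s ≤ dist p q})
    ⟨0, ∅, 0, by simp, by simp, by simp⟩ (chi_one_bddAbove hs)

/-- For `Γ ≤ 2` the set defining `dCrit Γ 1` contains every positive number, so its real supremum
takes the junk value `0`. -/
lemma two_lt_of_dCrit_pos {Γ : ℝ} (hd : 0 < dCrit Γ 1) : 2 < Γ := by
  by_contra! h
  have : dCrit Γ 1 = 0 := by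
    apply Real.sSup_of_not_bddAbove
    rintro ⟨b, hb⟩
    have hpos : 0 < |b| + 1 := by positivity
    have hchi : (1 : ℝ) ≤ chi 1 (|b| + 1) := by exact_mod_cast one_le_chi_one hpos
    have := hb (show |b| + 1 ∈ _ from ⟨hpos, by linarith⟩)
    linarith [le_abs_self b]
  linarith

/-- The unit ball contains two points at separation `s` only if `s ≤ 2`, whence `d ≤ 2`; the
packing bound at a separation in `(d / 2, d]` then gives the claim. -/
lemma Gamma_le {Γ : ℝ} (hd : 0 < dCrit Γ 1) : Γ ≤ 512 / dCrit Γ 1 ^ 2 := by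
  have hΓ := two_lt_of_dCrit_pos hd
  have hne : {s : ℝ | 0 < s ∧ Γ / 2 ≤ (chi 1 s : ℝ)}.Nonempty := by
    by_contra h
    rw [Set.not_nonempty_iff_eq_empty] at h
    rw [dCrit, h, Real.sSup_empty] at hd
    exact lt_irrefl _ hd
  have hle2 : dCrit Γ 1 ≤ 2 := by
    apply csSup_le hne
    rintro s ⟨hs, hsΓ⟩
    obtain ⟨S, x, hc, h1, h2⟩ := chi_one_attained hs
    have h3 : (1 : ℝ) < S.card := by rw [hc]; linarith
    obtain ⟨p, hp, q, hq, hpq⟩ := Finset.one_lt_card.mp (by exact_mod_cast h3)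
    linarith [h2 p hp q hq hpq, dist_triangle_right p q x, h1 p hp, h1 q hq]
  obtain ⟨s, ⟨hs, hsΓ⟩, hlt⟩ := exists_lt_of_lt_csSup hne
    (show dCrit Γ 1 / 2 < sSup {s : ℝ | 0 < s ∧ Γ / 2 ≤ (chi 1 s : ℝ)} from half_lt_self hd)
  obtain ⟨S, x, hc, h1, h2⟩ := chi_one_attained hs
  have h3 := card_le_packing S x 1 s zero_le_one hs h1 h2
  rw [hc] at h3
  set d := dCrit Γ 1
  have h4 : 6 * 1 / s + 2 ≤ 16 / d := by
    rw [div_add' _ _ _ hs.ne', div_le_div_iff₀ hs hd]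
    nlinarith
  have h5 : (6 * 1 / s + 2) ^ 2 ≤ (16 / d) ^ 2 := by gcongr
  have e : 512 / d ^ 2 = 2 * (16 / d) ^ 2 := by ring
  rw [e]; linarith

/-! ### Quadratic growth around the receiver -/

/-- Quadratic growth of `A` around `v` at scale `dist u v`. -/
lemma card_ball_le {Γ ε : ℝ} (hΓ : 0 < Γ) {A : Finset Pt}
    (hA : ∀ y : Pt, ((A.filter (fun p => dist p y ≤ 1)).card : ℝ) ≤ Γ) {u v : Pt}
    (h : ClosePair A Γ ε u v) {r : ℝ} (hr : dist u v ≤ r) :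
    ((A.filter (fun p => dist p v ≤ r)).card : ℝ) ≤ 8192 * (r / dist u v) ^ 2 := by
  obtain ⟨-, -, huv, ζ, hζ0, hζ1, hD, -, -, hsep⟩ := h
  have hDpos : 0 < dist u v := dist_pos.mpr huv
  have hdpos : 0 < dCrit Γ 1 := by
    rw [hD] at hDpos; exact (pos_iff_pos_of_mul_pos hDpos).mp hζ0
  have hG := Gamma_le hdpos
  set D := dist u v
  set d := dCrit Γ 1
  have hrpos : 0 < r := hDpos.trans_le hr
  rcases le_total r ζ with h1 | h1
  · have h2 := card_le_packing (A.filter (fun p => dist p v ≤ r)) v r (D / 2) hrpos.le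
      (by positivity) (fun p hp => (Finset.mem_filter.mp hp).2) (by
        intro p hp q hq hpq
        rw [Finset.mem_filter] at hp hq
        exact hsep p hp.1 q hq.1 hpq (Or.inr (hp.2.trans h1)) (Or.inr (hq.2.trans h1)))
    have h3 : 1 ≤ r / D := (one_le_div hDpos).mpr hr
    have e : 6 * r / (D / 2) = 12 * (r / D) := by field_simp; ring
    rw [e] at h2
    nlinarith
  · have hdens : Γ ≤ 512 * (1 / d) ^ 2 := by
      have e : 512 * (1 / d) ^ 2 = 512 / d ^ 2 := by ring
      rwa [e]
    rcases le_total r 1 with h2 | h2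
    · have h3 : ((A.filter (fun p => dist p v ≤ r)).card : ℝ) ≤ Γ := by
        refine le_trans ?_ (hA v)
        norm_cast
        refine Finset.card_le_card fun p hp => ?_
        rw [Finset.mem_filter] at hp ⊢
        exact ⟨hp.1, hp.2.trans h2⟩
      have h4 : 1 / d ≤ r / D := by
        rw [div_le_div_iff₀ hdpos hDpos, hD]; nlinarith
      have h5 : (1 / d) ^ 2 ≤ (r / D) ^ 2 := by gcongr
      linarith [sq_nonneg (r / D)]
    · have h3 := card_le_grid (A.filter (fun p => dist p v ≤ r)) v r 1 Γ hrpos.le one_pos hΓ.le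
        (fun p hp => (Finset.mem_filter.mp hp).2) (by
          intro y
          refine le_trans ?_ (hA y)
          norm_cast
          exact Finset.card_le_card (Finset.filter_subset_filter _ (Finset.filter_subset _ _)))
      have h4 : 1 / d ≤ 1 / D := by
        apply one_div_le_one_div_of_le hDpos; rw [hD]; nlinarith
      have h5 : (1 / d) ^ 2 ≤ (1 / D) ^ 2 := by gcongr
      calc _ ≤ _ := h3
        _ ≤ (512 * (1 / D) ^ 2) * (4 * r) ^ 2 := by
            gcongr
            · linarith
            · rw [div_one]; linarith
        _ = 8192 * (r / D) ^ 2 := by ring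

/-! ### Dyadic summation of the interference -/

lemma ratio_lt_one {α : ℝ} (hα : 2 < α) : 4 * (2 : ℝ) ^ (-α) < 1 := by
  have h1 : (2 : ℝ) ^ (-α) < (2 : ℝ) ^ (-2 : ℝ) :=
    Real.rpow_lt_rpow_of_exponent_lt one_lt_two (by linarith)
  have h2 : (2 : ℝ) ^ (-2 : ℝ) = 1 / 4 := by
    rw [Real.rpow_neg two_pos.le]; norm_num
  rw [h2] at h1; linarith

/-- Dyadic summation: under quadratic growth of the counting function of `f`, the sum of `f ^ (-α)`
over large values of `f` is at most the tail of a geometric series of ratio `4 * 2 ^ (-α)`. -/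
lemma sum_far_le (α C : ℝ) (hα : 2 < α) (A S : Finset Pt) (f : Pt → ℝ)
    (hcount : ∀ t : ℝ, 1 ≤ t → ((A.filter (fun p => f p ≤ t)).card : ℝ) ≤ C * t ^ 2)
    (m : ℕ) (hSA : S ⊆ A) (hS : ∀ p ∈ S, (2 : ℝ) ^ m < f p) :
    ∑ p ∈ S, f p ^ (-α) ≤ 4 * C * (4 * (2 : ℝ) ^ (-α)) ^ m * (1 - 4 * (2 : ℝ) ^ (-α))⁻¹ := by
  set q : ℝ := 4 * (2 : ℝ) ^ (-α) with hq
  have hC : 0 ≤ C := by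
    have := hcount 1 le_rfl
    have h0 : (0 : ℝ) ≤ ((A.filter (fun p => f p ≤ 1)).card : ℝ) := Nat.cast_nonneg _
    linarith
  have hq0 : 0 ≤ q := by positivity
  have hq1 : q < 1 := ratio_lt_one hα
  have hshell : ∀ k : ℕ, ∑ p ∈ S.filter (fun p => (2 : ℝ) ^ k < f p ∧ f p ≤ 2 ^ (k + 1)), f p ^ (-α)
      ≤ 4 * C * q ^ k := by
    intro k
    set B := S.filter (fun p => (2 : ℝ) ^ k < f p ∧ f p ≤ 2 ^ (k + 1)) with hB
    have hterm : ∀ p ∈ B, f p ^ (-α) ≤ ((2 : ℝ) ^ (-α)) ^ k := by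
      intro p hp
      have h1 := (Finset.mem_filter.mp hp).2.1
      have e : ((2 : ℝ) ^ (-α)) ^ k = ((2 : ℝ) ^ k) ^ (-α) := by
        rw [← Real.rpow_natCast, ← Real.rpow_natCast, ← Real.rpow_mul two_pos.le,
          ← Real.rpow_mul two_pos.le, mul_comm]
      rw [e]
      exact Real.rpow_le_rpow_of_nonpos (by positivity) h1.le (by linarith)
    have hcard : (B.card : ℝ) ≤ C * ((2 : ℝ) ^ (k + 1)) ^ 2 := by
      refine le_trans ?_ (hcount _ (one_le_pow₀ one_le_two))
      refine Nat.cast_le.mpr (Finset.card_le_card fun p hp => ?_)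
      rw [Finset.mem_filter] at hp ⊢
      exact ⟨hSA hp.1, hp.2.2⟩
    calc ∑ p ∈ B, f p ^ (-α) ≤ B.card • ((2 : ℝ) ^ (-α)) ^ k := Finset.sum_le_card_nsmul _ _ _ hterm
      _ = (B.card : ℝ) * ((2 : ℝ) ^ (-α)) ^ k := nsmul_eq_mul _ _
      _ ≤ C * ((2 : ℝ) ^ (k + 1)) ^ 2 * ((2 : ℝ) ^ (-α)) ^ k := by gcongr
      _ = 4 * C * q ^ k := by
          rw [hq, mul_pow, ← pow_mul, mul_comm (k + 1) 2, pow_mul, pow_succ]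
          norm_num; ring
  have hind : ∀ n : ℕ, ∑ p ∈ S.filter (fun p => f p ≤ 2 ^ (m + n)), f p ^ (-α)
      ≤ 4 * C * q ^ m * ∑ j ∈ Finset.range n, q ^ j := by
    intro n
    induction n with
    | zero =>
      have : S.filter (fun p => f p ≤ 2 ^ (m + 0)) = ∅ := by
        rw [Finset.filter_eq_empty_iff]
        intro p hp
        simpa using hS p hp
      rw [this]; simp
    | succ n ih =>
      have hsub : S.filter (fun p => f p ≤ 2 ^ (m + (n + 1))) ⊆
          S.filter (fun p => f p ≤ 2 ^ (m + n)) ∪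
          S.filter (fun p => (2 : ℝ) ^ (m + n) < f p ∧ f p ≤ 2 ^ (m + n + 1)) := by
        intro p hp
        rw [Finset.mem_filter] at hp
        rw [Finset.mem_union, Finset.mem_filter, Finset.mem_filter]
        rcases le_or_gt (f p) (2 ^ (m + n)) with h | h
        · exact Or.inl ⟨hp.1, h⟩
        · exact Or.inr ⟨hp.1, h, hp.2⟩
      have hnn : ∀ p ∈ S, 0 ≤ f p ^ (-α) := fun p hp =>
        Real.rpow_nonneg ((by positivity : (0 : ℝ) ≤ 2 ^ m).trans (hS p hp).le) _
      have hdisj : Disjoint (S.filter (fun p => f p ≤ 2 ^ (m + n)))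
          (S.filter (fun p => (2 : ℝ) ^ (m + n) < f p ∧ f p ≤ 2 ^ (m + n + 1))) :=
        Finset.disjoint_filter.mpr fun p _ h1 h2 => not_lt.mpr h1 h2.1
      have h1 := Finset.sum_le_sum_of_subset_of_nonneg (f := fun p => f p ^ (-α)) hsub
        (fun p hp _ => hnn p (by
          rw [Finset.mem_union, Finset.mem_filter, Finset.mem_filter] at hp
          rcases hp with hp | hp <;> exact hp.1))
      rw [Finset.sum_union hdisj] at h1
      have h2 := hshell (m + n)
      rw [Finset.sum_range_succ, mul_add]
      have e : 4 * C * q ^ (m + n) = 4 * C * q ^ m * q ^ n := by rw [pow_add]; ring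
      linarith
  obtain ⟨n, hn⟩ : ∃ n : ℕ, ∀ p ∈ S, f p ≤ 2 ^ (m + n) := by
    obtain ⟨n, hn⟩ := pow_unbounded_of_one_lt (∑ p ∈ S, |f p|) (one_lt_two : (1 : ℝ) < 2)
    refine ⟨n, fun p hp => ?_⟩
    have h1 := Finset.single_le_sum (f := fun p => |f p|) (fun p _ => abs_nonneg _) hp
    have h2 : (2 : ℝ) ^ n ≤ 2 ^ (m + n) := pow_le_pow_right₀ one_le_two (by omega)
    have h3 := le_abs_self (f p)
    linarith
  have h1 := hind n
  rw [Finset.filter_true_of_mem hn] at h1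
  refine h1.trans ?_
  gcongr
  rw [← tsum_geometric_of_lt_one hq0 hq1]
  exact (summable_geometric_of_lt_one hq0 hq1).sum_le_tsum _ (fun _ _ => by positivity)

/-! ### Reception -/

/-- Fix path-loss `α > 2`, threshold `β > 1`, noise `𝒩 > 0`, power
`P = 𝒩·β`, and `ε ∈ (0,1)`. There is a constant `κ ∈ ℕ` (depending only on the fixed
parameters) such that: for every `Γ > 0`, every finite set `A ⊂ ℝ²` of density at most `Γ`,
and every close pair `u, v ∈ A`, there exists `A' ⊆ A` with `u, v ∈ A'` and `|A'| ≤ κ` such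
that whenever `u` transmits and no other element of `A'` transmits (the transmitter set
`T ⊆ A` satisfies `T ∩ A' = {u}`), `v` receives the message of `u`: `SINR(u,v,T) ≥ β`. -/
theorem close_pair_reception
    (α β noise ε : ℝ) (hα : 2 < α) (hβ : 1 < β) (hnoise : 0 < noise)
    (hε₀ : 0 < ε) (hε₁ : ε < 1) :
    ∃ κ : ℕ,
      ∀ Γ : ℝ, 0 < Γ →
        ∀ A : Finset Pt,
          (∀ y : Pt, ((A.filter (fun p => dist p y ≤ 1)).card : ℝ) ≤ Γ) →
          ∀ u v : Pt, ClosePair A Γ ε u v →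
            ∃ A' : Finset Pt, A' ⊆ A ∧ u ∈ A' ∧ v ∈ A' ∧ A'.card ≤ κ ∧
              ∀ T : Finset Pt, T ⊆ A → u ∈ T → T ∩ A' = {u} →
                β ≤ sinr α (noise * β) noise u v T := by
  set q : ℝ := 4 * (2 : ℝ) ^ (-α) with hq
  have hq0 : 0 ≤ q := by positivity
  have hq1 : q < 1 := ratio_lt_one hα
  -- `c` is the admissible interference, normalised by the strength of the signal of `u` at `v`.
  set c : ℝ := (1 - (1 - ε) ^ α) / β with hc
  have hc0 : 0 < c := by
    have : (1 - ε) ^ α < 1 := Real.rpow_lt_one (by linarith) (by linarith) (by linarith)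
    exact div_pos (by linarith) (by linarith)
  obtain ⟨m, hm⟩ : ∃ m : ℕ, 4 * 8192 * q ^ m * (1 - q)⁻¹ ≤ c := by
    have hden : 0 < 1 - q := by linarith
    obtain ⟨m, hm⟩ := exists_pow_lt_of_lt_one (show 0 < c * (1 - q) / (4 * 8192) by positivity) hq1
    refine ⟨m, ?_⟩
    rw [lt_div_iff₀ (by norm_num)] at hm
    rw [← div_eq_mul_inv, div_le_iff₀ hden]
    linarith
  refine ⟨8192 * 4 ^ m, fun Γ hΓ A hA u v huv => ?_⟩
  have hgrow : ∀ r, dist u v ≤ r →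
      ((A.filter (fun p => dist p v ≤ r)).card : ℝ) ≤ 8192 * (r / dist u v) ^ 2 :=
    fun r hr => card_ball_le hΓ hA huv hr
  obtain ⟨huA, hvA, hne, ζ, -, -, -, hDε, -, -⟩ := huv
  have hD : 0 < dist u v := dist_pos.mpr hne
  set D := dist u v with hDdef
  have hpow : (1 : ℝ) ≤ 2 ^ m := one_le_pow₀ one_le_two
  refine ⟨A.filter (fun p => dist p v ≤ 2 ^ m * D), Finset.filter_subset _ _,
    Finset.mem_filter.mpr ⟨huA, by nlinarith⟩,
    Finset.mem_filter.mpr ⟨hvA, by rw [dist_self]; positivity⟩, ?_, ?_⟩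
  · have h := hgrow (2 ^ m * D) (by nlinarith)
    rw [mul_div_cancel_right₀ _ hD.ne', ← pow_mul, mul_comm m 2, pow_mul] at h
    norm_num at h
    exact_mod_cast h
  · intro T hTA huT hT
    have hfar : ∀ w ∈ T.erase u, (2 : ℝ) ^ m < dist w v / D := by
      intro w hw
      rw [Finset.mem_erase] at hw
      rw [lt_div_iff₀ hD]
      by_contra! hle
      have : w ∈ T ∩ A.filter (fun p => dist p v ≤ 2 ^ m * D) :=
        Finset.mem_inter.mpr ⟨hw.2, Finset.mem_filter.mpr ⟨hTA hw.2, hle⟩⟩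
      rw [hT, Finset.mem_singleton] at this
      exact hw.1 this
    have hsum := sum_far_le α 8192 hα A (T.erase u) (fun p => dist p v / D) (by
      intro t ht
      have h := hgrow (t * D) (by nlinarith)
      rw [mul_div_cancel_right₀ _ hD.ne'] at h
      simpa only [div_le_iff₀ hD] using h) m
      ((Finset.erase_subset _ _).trans hTA) hfar
    have hsum' : ∑ w ∈ T.erase u, (dist w v / D) ^ (-α) ≤ c := hsum.trans hm
    have hscale : ∑ w ∈ T.erase u, dist w v ^ (-α)
        = D ^ (-α) * ∑ w ∈ T.erase u, (dist w v / D) ^ (-α) := by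
      rw [Finset.mul_sum]
      refine Finset.sum_congr rfl fun w _ => ?_
      rw [Real.div_rpow dist_nonneg hD.le, mul_div_cancel₀]
      exact (Real.rpow_pos_of_pos hD _).ne'
    have hS0 : 0 ≤ ∑ w ∈ T.erase u, dist w v ^ (-α) :=
      Finset.sum_nonneg fun w _ => Real.rpow_nonneg dist_nonneg _
    have hDα : 0 < D ^ (-α) := Real.rpow_pos_of_pos hD _
    have hI : β * ∑ w ∈ T.erase u, dist w v ^ (-α) ≤ D ^ (-α) * (1 - (1 - ε) ^ α) := by
      have e : D ^ (-α) * (1 - (1 - ε) ^ α) = β * (D ^ (-α) * c) := by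
        rw [hc]; field_simp
      rw [hscale, e]
      gcongr
    -- The ambient noise uses up at most the fraction `(1 - ε) ^ α` of the signal, as `D ≤ 1 - ε`.
    have hone : 1 ≤ D ^ (-α) * (1 - ε) ^ α := by
      have h1 : D ^ α ≤ (1 - ε) ^ α := Real.rpow_le_rpow hD.le hDε (by linarith)
      have h2 : D ^ (-α) * D ^ α = 1 := by
        rw [← Real.rpow_add hD]; simp
      calc (1 : ℝ) = D ^ (-α) * D ^ α := h2.symm
        _ ≤ _ := by gcongr
    have hβ0 : 0 < β := by linarith
    have hden : 0 < noise + noise * β * ∑ w ∈ T.erase u, dist w v ^ (-α) :=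
      add_pos_of_pos_of_nonneg hnoise (mul_nonneg (mul_pos hnoise hβ0).le hS0)
    rw [sinr, ← Finset.mul_sum, le_div_iff₀ hden, ← hDdef]
    have : 1 + β * ∑ w ∈ T.erase u, dist w v ^ (-α) ≤ D ^ (-α) := by linarith
    calc β * (noise + noise * β * ∑ w ∈ T.erase u, dist w v ^ (-α))
        = noise * β * (1 + β * ∑ w ∈ T.erase u, dist w v ^ (-α)) := by ring
      _ ≤ noise * β * D ^ (-α) := by gcongr
end

section
/- Fix a path-loss α > 2, a threshold β > 1, a noise 𝒩 > 0, power P = 𝒩·β, ε ∈ (0,1), and r ≥ 1. There exist constants κ, ρ ∈ ℕ (depending only on α, β, ε, r) with the following property. Let Γ > 0 and let A ⊂ ℝ² be a finite r-clustered set of density at most Γ. Then for every cluster c and every close pair u,v of nodes of cluster c, there exist a set A' ⊆ A with |A'| ≤ κ and a set C of cluster IDs with |C| ≤ ρ and c ∉ C such that u receives the message transmitted by v (SINR(v, u, T) ≥ β) in every round whose transmitter set T ⊆ A satisfies: v ∈ T, no node of A' other than v is in T, and no node whose cluster lies in C is in T. -/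
/-!
With `P = 𝒩 β` and `d(u,v) ≤ 1 - ε`, the noise uses up only a fraction `(1 - ε) ^ α` of the
SINR budget, so it suffices that the sum of `d(w,u) ^ (-α)` over the interferers `w` is at most
a fixed constant times `d(u,v) ^ (-α)` (`le_sinr_of_sum_le`).

The geometric tool is `packing_tail`. An `s`-separated family of points injects into the cells
of a square grid of side `s / 2`, and the sum of `‖z‖ ^ (-α)` over the integer lattice `ℤ²`
converges for `α > 2`. Hence all but boundedly many members of the family contribute as little as
desired, relative to `s ^ (-α)`. Counting grid cells also gives `Γ d_{Γ,r} ^ 2 = O(r ^ 2)`, and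
therefore `Γ d_{Γ,r} ^ α → 0` as `Γ → ∞` (`exists_density_threshold`). This fixes a threshold
`Γ₀` between sparse and dense clusterings.

* Own cluster (`own_cluster_le`): if `Γ ≤ Γ₀`, the whole cluster goes into `A'`. Otherwise the
  nodes within `ζ` of `u` are `d(u,v) / 2`-separated and are handled by `packing_tail`, and the
  at most `Γ` others contribute at most `Γ ζ ^ (-α) ≤ δ (ζ d_{Γ,r}) ^ (-α) = δ d(u,v) ^ (-α)`.
* Other clusters (`other_clusters_le`): the centers are `(1 - ε)`-separated, so outside a bounded
  set `C` of clusters the contribution is at most `Γ η` with `η` as small as desired, and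
  `Γ ≤ Γ₀ d(u,v) ^ (-α)` in the sparse and the dense case alike.
-/


open scoped Classical

/-- Close pair of an `r`-clustered set: `u, w ∈ X` in the same cluster,
(b) `d(u,w) = ζ·d_{Γ,r} ≤ 1−ε` for some `ζ ∈ (0,1]`;
(c) every other node of the same cluster is at distance `≥ d(u,w)` from both `u` and `w`;
(d) any two distinct nodes of the same cluster lying in `B(u,ζ) ∪ B(w,ζ)` are at distance
`≥ d(u,w)/2` from each other. -/
def ClosePairC (X : Finset Pt) (cl : Pt → ℕ) (Γ r ε : ℝ) (u w : Pt) : Prop :=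
  u ∈ X ∧ w ∈ X ∧ u ≠ w ∧ cl u = cl w ∧
  ∃ ζ : ℝ, 0 < ζ ∧ ζ ≤ 1 ∧
    dist u w = ζ * dCrit Γ r ∧ dist u w ≤ 1 - ε ∧
    (∀ x ∈ X, cl x = cl u → x ≠ u → x ≠ w → dist u w ≤ dist u x ∧ dist u w ≤ dist w x) ∧
    (∀ u' ∈ X, ∀ w' ∈ X, cl u' = cl u → cl w' = cl u → u' ≠ w' →
      (dist u' u ≤ ζ ∨ dist u' w ≤ ζ) → (dist w' u ≤ ζ ∨ dist w' w ≤ ζ) →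
      dist u w / 2 ≤ dist u' w')

/-! ### Packing via grid cells -/

/-- The square cell of side `s / 2` containing `p`, in the grid with origin `x`. -/
noncomputable def gridCell (s : ℝ) (x p : Pt) : Fin 2 → ℤ := fun i => ⌊2 * (p i - x i) / s⌋

/-- A cell has diameter `s / √2 < s`, so points at mutual distance `≥ s` lie in distinct cells. -/
lemma dist_lt_of_gridCell_eq {s : ℝ} (hs : 0 < s) (x p q : Pt)
    (h : gridCell s x p = gridCell s x q) : dist p q < s := by
  have key : ∀ i, (p i - q i) ^ 2 < s ^ 2 / 4 := by
    intro i
    have h1 := Int.abs_sub_lt_one_of_floor_eq_floor (congrFun h i)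
    have h2 : 2 * (p i - x i) / s - 2 * (q i - x i) / s = 2 * (p i - q i) / s := by
      field_simp; ring
    rw [h2, abs_lt] at h1
    obtain ⟨h3, h4⟩ := h1
    rw [lt_div_iff₀ hs] at h3
    rw [div_lt_iff₀ hs] at h4
    nlinarith
  rw [EuclideanSpace.dist_eq, Real.sqrt_lt' hs, Fin.sum_univ_two, Real.dist_eq, Real.dist_eq,
    sq_abs, sq_abs]
  have := key 0
  have := key 1
  nlinarith

lemma abs_gridCell_le {s : ℝ} (hs : 0 < s) (x p : Pt) (i : Fin 2) :
    |(gridCell s x p i : ℝ)| ≤ 2 * dist p x / s + 1 := by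
  have h1 : |p i - x i| ≤ dist p x := by
    rw [dist_eq_norm]
    exact PiLp.norm_apply_le (p - x) i
  have h2 : |2 * (p i - x i) / s| ≤ 2 * dist p x / s := by
    rw [abs_div, abs_mul, abs_of_pos hs, abs_two]
    gcongr
  have h3 := Int.floor_le (2 * (p i - x i) / s)
  have h4 := Int.lt_floor_add_one (2 * (p i - x i) / s)
  rw [abs_le] at h2 ⊢
  unfold gridCell
  constructor <;> linarith

/-- Injecting a separated family into its grid cells turns packing into counting cells. -/
lemma gridCell_injOn {ι : Type*} {s : ℝ} (hs : 0 < s) (x : Pt) (S : Finset ι) (f : ι → Pt)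
    (hsep : ∀ i ∈ S, ∀ j ∈ S, i ≠ j → s ≤ dist (f i) (f j)) :
    Set.InjOn (fun i => gridCell s x (f i)) (S : Set ι) := by
  intro i hi j hj hij
  by_contra hne
  exact absurd (dist_lt_of_gridCell_eq hs x _ _ hij) (not_lt.mpr (hsep i hi j hj hne))

/-- Packing tail bound. The constant `M` is uniform in the scale `s` and the family: away from
`M` of its members, among them all those within `L * s` of `x`, an `s`-separated family has total
path gain at most `η * s ^ (-α)` at `x`. -/
lemma packing_tail {α : ℝ} (hα : 2 < α) {η : ℝ} (hη : 0 < η) (L : ℝ) :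
    ∃ M : ℕ, ∀ {ι : Type} (s : ℝ), 0 < s → ∀ (x : Pt) (S : Finset ι) (f : ι → Pt),
      (∀ i ∈ S, ∀ j ∈ S, i ≠ j → s ≤ dist (f i) (f j)) →
      ∃ S' ⊆ S, S'.card ≤ M ∧ (∀ i ∈ S, dist (f i) x ≤ L * s → i ∈ S') ∧
        ∀ U ⊆ S, Disjoint U S' → ∑ i ∈ U, dist (f i) x ^ (-α) ≤ η * s ^ (-α) := by
  have hsum := EisensteinSeries.summable_one_div_norm_rpow hα
  have hη' : 0 < η / 4 ^ α := by positivity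
  obtain ⟨F, hF⟩ := summable_iff_vanishing_norm.mp hsum _ hη'
  obtain ⟨n, hn⟩ := exists_nat_ge (max (2 * L + 1) 2)
  have hn1 : 2 * L + 1 ≤ n := (le_max_left _ _).trans hn
  have hn2 : (2 : ℝ) ≤ n := (le_max_right _ _).trans hn
  let G : Finset (Fin 2 → ℤ) := F ∪ Finset.Icc (fun _ => -(n : ℤ)) (fun _ => (n : ℤ))
  refine ⟨G.card, fun {ι} s hs x S f hsep => ?_⟩
  have hinj := gridCell_injOn hs x S f hsep
  refine ⟨S.filter (fun i => gridCell s x (f i) ∈ G), Finset.filter_subset _ _, ?_, ?_, ?_⟩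
  · refine Finset.card_le_card_of_injOn (fun i => gridCell s x (f i)) ?_ ?_
    · intro i hi
      exact (Finset.mem_filter.mp hi).2
    · exact hinj.mono (by intro i hi; exact (Finset.mem_filter.mp hi).1)
  · intro i hi hd
    refine Finset.mem_filter.mpr ⟨hi, Finset.mem_union_right _ ?_⟩
    have hb : ∀ k, |(gridCell s x (f i) k : ℝ)| ≤ n := by
      intro k
      refine (abs_gridCell_le hs x (f i) k).trans (le_trans ?_ hn1)
      have : 2 * dist (f i) x / s ≤ 2 * L := by
        rw [div_le_iff₀ hs]; linarith
      linarith
    rw [Finset.mem_Icc]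
    constructor
    · intro k
      have := (abs_le.mp (hb k)).1
      exact_mod_cast this
    · intro k
      have := (abs_le.mp (hb k)).2
      exact_mod_cast this
  · intro U hU hdisj
    have hnot : ∀ i ∈ U, gridCell s x (f i) ∉ G := fun i hi hG =>
      Finset.disjoint_left.mp hdisj hi (Finset.mem_filter.mpr ⟨hU hi, hG⟩)
    have hterm : ∀ i ∈ U, dist (f i) x ^ (-α) ≤
        4 ^ α * s ^ (-α) * ‖gridCell s x (f i)‖ ^ (-α) := by
      intro i hi
      set z := gridCell s x (f i) with hz
      have hz2 : 2 ≤ ‖z‖ := by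
        by_contra hlt
        push Not at hlt
        apply hnot i hi
        refine Finset.mem_union_right _ ?_
        have hb : ∀ k, |(z k : ℝ)| ≤ n := fun k =>
          (norm_le_pi_norm z k).trans (hlt.le.trans hn2)
        rw [Finset.mem_Icc]
        constructor
        · intro k
          have := (abs_le.mp (hb k)).1
          exact_mod_cast this
        · intro k
          have := (abs_le.mp (hb k)).2
          exact_mod_cast this
      have hzle : ‖z‖ ≤ 2 * dist (f i) x / s + 1 :=
        (pi_norm_le_iff_of_nonneg (by positivity)).mpr fun k => abs_gridCell_le hs x (f i) k
      have hd : s * ‖z‖ / 4 ≤ dist (f i) x := by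
        have h1 : ‖z‖ / 2 ≤ 2 * dist (f i) x / s := by linarith
        rw [le_div_iff₀ hs] at h1
        linarith
      calc dist (f i) x ^ (-α) ≤ (s * ‖z‖ / 4) ^ (-α) :=
            Real.rpow_le_rpow_of_nonpos (by positivity) hd (by linarith)
        _ = 4 ^ α * s ^ (-α) * ‖z‖ ^ (-α) := by
            rw [Real.div_rpow (by positivity) (by positivity),
              Real.mul_rpow hs.le (by positivity), Real.rpow_neg (by norm_num : (0:ℝ) ≤ 4)]
            field_simp
    have hU' : Disjoint (U.image fun i => gridCell s x (f i)) F := by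
      rw [Finset.disjoint_left]
      intro z hz hzF
      obtain ⟨i, hi, rfl⟩ := Finset.mem_image.mp hz
      exact hnot i hi (Finset.mem_union_left _ hzF)
    have hFU := hF _ hU'
    rw [Finset.sum_image (hinj.mono (by exact_mod_cast hU))] at hFU
    have hFU' := (le_abs_self _).trans hFU.le
    calc ∑ i ∈ U, dist (f i) x ^ (-α)
        ≤ ∑ i ∈ U, 4 ^ α * s ^ (-α) * ‖gridCell s x (f i)‖ ^ (-α) := Finset.sum_le_sum hterm
      _ = 4 ^ α * s ^ (-α) * ∑ i ∈ U, ‖gridCell s x (f i)‖ ^ (-α) := by rw [Finset.mul_sum]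
      _ ≤ 4 ^ α * s ^ (-α) * (η / 4 ^ α) := by gcongr
      _ = η * s ^ (-α) := by field_simp

/-! ### The critical distance -/

/-- Area bound for packings: `χ(r, d) ≤ (4 r / d + 3)²`. -/
lemma chi_le {r d : ℝ} (hr : 0 ≤ r) (hd : 0 < d) : (chi r d : ℝ) ≤ (4 * r / d + 3) ^ 2 := by
  have hB : 0 ≤ (4 * r / d + 3) ^ 2 := by positivity
  rw [← Nat.le_floor_iff hB]
  unfold chi
  refine csSup_le' ?_
  rintro _ ⟨S, x, rfl, hball, hsep⟩
  rw [Nat.le_floor_iff hB]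
  set m : ℤ := ⌊2 * r / d + 1⌋ with hm
  have hm0 : 0 ≤ m := Int.floor_nonneg.mpr (by positivity)
  have hcard : S.card ≤ (Finset.Icc (fun _ : Fin 2 => -m) (fun _ => m)).card := by
    refine Finset.card_le_card_of_injOn (fun p => gridCell d x p) ?_
      (gridCell_injOn hd x S (fun p => p) hsep)
    intro p hp
    have hb : ∀ k, |gridCell d x p k| ≤ m := by
      intro k
      rw [hm, Int.le_floor, Int.cast_abs]
      refine (abs_gridCell_le hd x p k).trans ?_
      have := hball p hp
      gcongr
    simp only [Finset.coe_Icc, Set.mem_Icc]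
    exact ⟨fun k => (abs_le.mp (hb k)).1, fun k => (abs_le.mp (hb k)).2⟩
  rw [Pi.card_Icc, Fin.prod_univ_two, Int.card_Icc] at hcard
  have h1 : ((m + 1 - -m).toNat : ℝ) ≤ 4 * r / d + 3 := by
    have h2 : (((m + 1 - -m).toNat : ℤ) : ℝ) = 2 * m + 1 := by
      rw [Int.toNat_of_nonneg (by omega)]; push_cast; ring
    have h3 : (m : ℝ) ≤ 2 * r / d + 1 := Int.floor_le _
    have h4 : 4 * r / d = 2 * (2 * r / d) := by ring
    rw [Int.cast_natCast] at h2
    rw [h2, h4]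
    linarith
  calc (S.card : ℝ) ≤ ((m + 1 - -m).toNat : ℝ) * ((m + 1 - -m).toNat : ℝ) := by
        exact_mod_cast hcard
    _ ≤ (4 * r / d + 3) ^ 2 := by
        rw [sq]; gcongr

lemma dCrit_nonneg (Γ r : ℝ) : 0 ≤ dCrit Γ r :=
  Real.sSup_nonneg fun _ hd => hd.1.le

/-- For densities that are not small, `d_{Γ,r}` is of order at most `r / √Γ`. -/
lemma mul_dCrit_sq_le {Γ r : ℝ} (hΓ : 32 < Γ) (hr : 0 < r) :
    Γ * dCrit Γ r ^ 2 ≤ 512 * r ^ 2 := by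
  have hΓ0 : 0 < Γ := by linarith
  have h : dCrit Γ r ≤ √(512 * r ^ 2 / Γ) := by
    refine Real.sSup_le ?_ (Real.sqrt_nonneg _)
    rintro d ⟨hd, hle⟩
    have h1 := hle.trans (chi_le hr.le hd)
    have h2 : d < 4 * r := by
      by_contra hge
      push Not at hge
      have h3 : 4 * r / d ≤ 1 := by rw [div_le_one hd]; exact hge
      have h4 : 0 ≤ 4 * r / d := by positivity
      nlinarith
    have h3 : 1 ≤ 4 * r / d := by rw [le_div_iff₀ hd]; linarith
    have h4 : Γ / 2 ≤ (16 * r / d) ^ 2 := by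
      refine h1.trans ?_
      have h5 : 16 * r / d = 4 * (4 * r / d) := by ring
      rw [h5]
      gcongr
      linarith
    apply Real.le_sqrt_of_sq_le
    rw [le_div_iff₀ hΓ0]
    rw [div_pow, le_div_iff₀ (by positivity)] at h4
    nlinarith
  have h2 := pow_le_pow_left₀ (dCrit_nonneg Γ r) h 2
  rw [Real.sq_sqrt (by positivity), le_div_iff₀ hΓ0] at h2
  linarith

/-- Since `α > 2`, the bound `Γ * d_{Γ,r} ^ 2 = O(r ^ 2)` makes `Γ * d_{Γ,r} ^ α` arbitrarily
small for dense clusters. -/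
lemma exists_density_threshold {α r δ : ℝ} (hα : 2 < α) (hr : 0 < r) (hδ : 0 < δ) :
    ∃ Γ₀ : ℝ, 1 ≤ Γ₀ ∧ ∀ Γ, Γ₀ < Γ → Γ * dCrit Γ r ^ α ≤ δ := by
  set t : ℝ := (δ / (512 * r ^ 2)) ^ (α - 2)⁻¹ with ht
  have ht0 : 0 < t := by positivity
  refine ⟨max 32 (512 * r ^ 2 / t ^ 2), le_max_of_le_left (by norm_num), fun Γ hΓ => ?_⟩
  have h32 : 32 < Γ := (le_max_left _ _).trans_lt hΓ
  have hΓt : 512 * r ^ 2 / t ^ 2 < Γ := (le_max_right _ _).trans_lt hΓ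
  have hsq := mul_dCrit_sq_le h32 hr
  have hD := dCrit_nonneg Γ r
  set D := dCrit Γ r
  have hDt : D ≤ t := by
    rw [div_lt_iff₀ (by positivity)] at hΓt
    refine le_of_sq_le_sq ?_ ht0.le
    by_contra hlt
    push Not at hlt
    nlinarith
  have hpow : D ^ (α - 2) ≤ δ / (512 * r ^ 2) := by
    calc D ^ (α - 2) ≤ t ^ (α - 2) := Real.rpow_le_rpow hD hDt (by linarith)
      _ = δ / (512 * r ^ 2) := by
        rw [ht, Real.rpow_inv_rpow (by positivity) (by linarith)]
  have hsplit : D ^ α = D ^ 2 * D ^ (α - 2) := by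
    rw [← Real.rpow_natCast D 2, ← Real.rpow_add_of_nonneg hD (by norm_num) (by linarith)]
    congr 1; push_cast; ring
  calc Γ * D ^ α = (Γ * D ^ 2) * D ^ (α - 2) := by rw [hsplit]; ring
    _ ≤ (512 * r ^ 2) * (δ / (512 * r ^ 2)) := by gcongr
    _ = δ := by field_simp

/-! ### Interference bounds -/

/-- Interference from other clusters: outside the own cluster `c` and boundedly many nearby
clusters, all transmitters together contribute at most `Γ * η` at a point `u`, because each
cluster has at most `Γ` nodes, all at distance comparable to that of its center. -/
lemma other_clusters_le {α ε r η : ℝ} (hα : 2 < α) (hε : ε < 1) (hr : 0 < r) (hη : 0 < η) :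
    ∃ ρ : ℕ, ∀ (Γ : ℝ) (A : Finset Pt) (cl : Pt → ℕ) (center : ℕ → Pt), 0 < Γ →
      IsRClustering A cl center r ε →
      (∀ c ∈ A.image cl, ((A.filter (fun p => cl p = c)).card : ℝ) ≤ Γ) →
      ∀ (c : ℕ) (u : Pt), ∃ C : Finset ℕ, C.card ≤ ρ ∧ c ∉ C ∧
        ∀ W ⊆ A, (∀ w ∈ W, cl w ≠ c ∧ cl w ∉ C) → ∑ w ∈ W, dist w u ^ (-α) ≤ Γ * η := by
  have hs : 0 < 1 - ε := by linarith
  have hη' : 0 < η / (2 ^ α * (1 - ε) ^ (-α)) := by positivity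
  obtain ⟨ρ, hρ⟩ := packing_tail hα hη' (2 * r / (1 - ε))
  refine ⟨ρ, fun Γ A cl center hΓ hcl hdens c u => ?_⟩
  obtain ⟨C, hCsub, hCcard, hCnear, hC⟩ := hρ (1 - ε) hs u ((A.image cl).erase c) center
    (fun i hi j hj hij =>
      hcl.2 i (Finset.mem_of_mem_erase hi) j (Finset.mem_of_mem_erase hj) hij)
  refine ⟨C, hCcard, fun h => Finset.notMem_erase c _ (hCsub h), fun W hWA hW => ?_⟩
  have hsub : W.image cl ⊆ (A.image cl).erase c := by
    intro i hi
    obtain ⟨w, hw, rfl⟩ := Finset.mem_image.mp hi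
    exact Finset.mem_erase.mpr ⟨(hW w hw).1, Finset.mem_image_of_mem cl (hWA hw)⟩
  have hdisj : Disjoint (W.image cl) C := by
    rw [Finset.disjoint_left]
    intro i hi
    obtain ⟨w, hw, rfl⟩ := Finset.mem_image.mp hi
    exact (hW w hw).2
  have htail := hC _ hsub hdisj
  have hfib : ∀ i ∈ W.image cl, ∑ w ∈ W with cl w = i, dist w u ^ (-α) ≤
      Γ * (2 ^ α * dist (center i) u ^ (-α)) := by
    intro i hi
    have hiA : i ∈ A.image cl := Finset.mem_of_mem_erase (hsub hi)
    have hfar : 2 * r < dist (center i) u := by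
      by_contra hle
      push Not at hle
      refine Finset.disjoint_left.mp hdisj hi (hCnear i (hsub hi) ?_)
      rwa [div_mul_cancel₀ _ hs.ne']
    have hterm : ∀ w ∈ W.filter (fun w => cl w = i),
        dist w u ^ (-α) ≤ 2 ^ α * dist (center i) u ^ (-α) := by
      intro w hw
      obtain ⟨hwW, hwi⟩ := Finset.mem_filter.mp hw
      have h1 := (hcl.1 i hiA).2.2 w (hWA hwW) hwi
      have h2 : dist (center i) u / 2 ≤ dist w u := by
        have := dist_triangle_left (center i) u w
        linarith
      calc dist w u ^ (-α) ≤ (dist (center i) u / 2) ^ (-α) :=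
            Real.rpow_le_rpow_of_nonpos (by linarith) h2 (by linarith)
        _ = 2 ^ α * dist (center i) u ^ (-α) := by
            rw [Real.div_rpow dist_nonneg (by norm_num),
              Real.rpow_neg (by norm_num : (0:ℝ) ≤ 2)]
            field_simp
    refine (Finset.sum_le_card_nsmul _ _ _ hterm).trans ?_
    rw [nsmul_eq_mul]
    have hc : ((W.filter (fun w => cl w = i)).card : ℝ) ≤ Γ :=
      le_trans (by exact_mod_cast Finset.card_le_card (Finset.filter_subset_filter _ hWA))
        (hdens i hiA)
    gcongr
  rw [← Finset.sum_fiberwise_of_maps_to (fun w hw => Finset.mem_image_of_mem cl hw)]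
  calc _ ≤ ∑ i ∈ W.image cl, Γ * (2 ^ α * dist (center i) u ^ (-α)) := Finset.sum_le_sum hfib
    _ = Γ * (2 ^ α * ∑ i ∈ W.image cl, dist (center i) u ^ (-α)) := by
        rw [Finset.mul_sum, Finset.mul_sum]
    _ ≤ Γ * (2 ^ α * (η / (2 ^ α * (1 - ε) ^ (-α)) * (1 - ε) ^ (-α))) := by gcongr
    _ = Γ * η := by field_simp

/-- Interference from the own cluster. In a sparse cluster (`Γ ≤ Γ₀`) all nodes can be silenced.
In a dense one, nodes within `ζ` of `u` are `d(u,v)/2`-separated, so a packing bound applies,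
while the at most `Γ` remaining nodes give at most `Γ ζ^(-α) ≤ δ d(u,v)^(-α)`. -/
lemma own_cluster_le {α r δ Γ₀ : ℝ} (ε : ℝ) (hα : 2 < α) (hδ : 0 < δ)
    (hΓ₀ : ∀ Γ, Γ₀ < Γ → Γ * dCrit Γ r ^ α ≤ δ) :
    ∃ κ : ℕ, ∀ (Γ : ℝ) (A : Finset Pt) (cl : Pt → ℕ), 0 < Γ →
      (∀ c ∈ A.image cl, ((A.filter (fun p => cl p = c)).card : ℝ) ≤ Γ) →
      ∀ u v, ClosePairC A cl Γ r ε u v → ∃ A' ⊆ A, A'.card ≤ κ ∧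
        ∀ W ⊆ A, (∀ w ∈ W, cl w = cl u ∧ w ∉ A') →
          ∑ w ∈ W, dist w u ^ (-α) ≤ 2 * δ * dist u v ^ (-α) := by
  have hη : 0 < δ / 2 ^ α := by positivity
  obtain ⟨M, hM⟩ := packing_tail hα hη 0
  refine ⟨max M ⌊Γ₀⌋₊, fun Γ A cl hΓ hdens u v hclose => ?_⟩
  obtain ⟨huA, hvA, huv, hclv, ζ, hζ0, hζ1, hdist, hdε, -, hsep⟩ := hclose
  have hcard := hdens (cl u) (Finset.mem_image_of_mem cl huA)
  have hd : 0 < dist u v := dist_pos.mpr huv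
  rcases le_or_gt Γ Γ₀ with hsparse | hdense
  · refine ⟨A.filter (fun p => cl p = cl u), Finset.filter_subset _ _,
      le_max_of_le_right (Nat.le_floor (hcard.trans hsparse)), fun W hWA hW => ?_⟩
    have hempty : W = ∅ := Finset.eq_empty_of_forall_notMem fun w hw =>
      (hW w hw).2 (Finset.mem_filter.mpr ⟨hWA hw, (hW w hw).1⟩)
    rw [hempty, Finset.sum_empty]
    positivity
  · have hD : 0 < dCrit Γ r := by
      rw [hdist] at hd
      exact pos_of_mul_pos_right hd hζ0.le
    obtain ⟨A', hA'sub, hA'card, -, hA'⟩ := hM (dist u v / 2) (by positivity) u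
      (A.filter (fun p => cl p = cl u ∧ dist p u ≤ ζ)) (fun p => p) (by
        intro p hp q hq hpq
        obtain ⟨hpA, hpc, hpζ⟩ := Finset.mem_filter.mp hp
        obtain ⟨hqA, hqc, hqζ⟩ := Finset.mem_filter.mp hq
        exact hsep p hpA q hqA hpc hqc hpq (Or.inl hpζ) (Or.inl hqζ))
    refine ⟨A', hA'sub.trans (Finset.filter_subset _ _), le_max_of_le_left hA'card,
      fun W hWA hW => ?_⟩
    have hnear := hA' (W.filter (fun w => dist w u ≤ ζ))
      (fun w hw => by
        obtain ⟨hw1, hw2⟩ := Finset.mem_filter.mp hw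
        exact Finset.mem_filter.mpr ⟨hWA hw1, (hW w hw1).1, hw2⟩)
      (Finset.disjoint_left.mpr fun w hw => (hW w (Finset.mem_filter.mp hw).1).2)
    have hscale : δ / 2 ^ α * (dist u v / 2) ^ (-α) = δ * dist u v ^ (-α) := by
      rw [Real.div_rpow hd.le (by norm_num), Real.rpow_neg (by norm_num : (0:ℝ) ≤ 2)]
      field_simp
    rw [hscale] at hnear
    have hfar : ∑ w ∈ W with ¬ dist w u ≤ ζ, dist w u ^ (-α) ≤ Γ * ζ ^ (-α) := by
      have hterm : ∀ w ∈ W.filter (fun w => ¬ dist w u ≤ ζ), dist w u ^ (-α) ≤ ζ ^ (-α) := by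
        intro w hw
        exact Real.rpow_le_rpow_of_nonpos hζ0
          (not_le.mp (Finset.mem_filter.mp hw).2).le (by linarith)
      refine (Finset.sum_le_card_nsmul _ _ _ hterm).trans ?_
      rw [nsmul_eq_mul]
      have hc : ((W.filter (fun w => ¬ dist w u ≤ ζ)).card : ℝ) ≤ Γ := by
        refine le_trans ?_ hcard
        exact_mod_cast Finset.card_le_card fun w hw =>
          Finset.mem_filter.mpr ⟨hWA (Finset.mem_filter.mp hw).1,
            (hW w (Finset.mem_filter.mp hw).1).1⟩
      gcongr
    have hΓζ : Γ * ζ ^ (-α) ≤ δ * dist u v ^ (-α) := by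
      have h1 := hΓ₀ Γ hdense
      have h2 : Γ ≤ δ * dCrit Γ r ^ (-α) := by
        rw [Real.rpow_neg hD.le, ← div_eq_mul_inv, le_div_iff₀ (by positivity)]
        exact h1
      rw [hdist, Real.mul_rpow hζ0.le hD.le]
      calc Γ * ζ ^ (-α) ≤ δ * dCrit Γ r ^ (-α) * ζ ^ (-α) := by gcongr
        _ = δ * (ζ ^ (-α) * dCrit Γ r ^ (-α)) := by ring
    rw [← Finset.sum_filter_add_sum_filter_not W (fun w => dist w u ≤ ζ)]
    linarith

/-- With `P = 𝒩 * β` and `d(v,u) ≤ 1 - ε`, reception follows once the total path gain of the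
interferers is at most the fraction `(1 - (1 - ε) ^ α) / β` of the path gain of `v`. -/
lemma le_sinr_of_sum_le {α β noise ε : ℝ} (hα : 0 < α) (hβ : 0 < β) (hnoise : 0 < noise)
    (hε₁ : ε < 1) {v u : Pt} {T : Finset Pt} (huv : 0 < dist u v) (hle : dist u v ≤ 1 - ε)
    (hsum : ∑ w ∈ T.erase v, dist w u ^ (-α) ≤ (1 - (1 - ε) ^ α) / β * dist u v ^ (-α)) :
    β ≤ sinr α (noise * β) noise v u T := by
  have hs : 0 < 1 - ε := by linarith
  have h0 : 0 ≤ ∑ w ∈ T.erase v, dist w u ^ (-α) :=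
    Finset.sum_nonneg fun w _ => Real.rpow_nonneg dist_nonneg _
  unfold sinr
  rw [← Finset.mul_sum, dist_comm v u]
  generalize ∑ w ∈ T.erase v, dist w u ^ (-α) = I at *
  rw [le_div_iff₀ (by positivity)]
  have h1 : 1 ≤ (1 - ε) ^ α * dist u v ^ (-α) := by
    rw [Real.rpow_neg huv.le, ← div_eq_mul_inv, one_le_div (by positivity)]
    exact Real.rpow_le_rpow huv.le hle hα.le
  have h2 : β * I ≤ (1 - (1 - ε) ^ α) * dist u v ^ (-α) := by
    calc _ ≤ β * ((1 - (1 - ε) ^ α) / β * dist u v ^ (-α)) := by gcongr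
      _ = _ := by field_simp
  calc β * (noise + noise * β * I)
      = noise * β * (1 + β * I) := by ring
    _ ≤ noise * β * dist u v ^ (-α) := by
        gcongr
        linarith

/-- Fix path-loss `α > 2`, threshold `β > 1`, noise `𝒩 > 0`, power
`P = 𝒩·β`, `ε ∈ (0,1)`, and `r ≥ 1`. There exist constants `κ, ρ ∈ ℕ` (depending only on the
fixed parameters) such that: for every `Γ > 0`, every finite `r`-clustered set `A ⊂ ℝ²` of
density at most `Γ`, every cluster `c` and every close pair `u, v` of nodes of cluster `c`,
there are a set `A' ⊆ A` with `|A'| ≤ κ` and a set `C` of cluster IDs with `|C| ≤ ρ` and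
`c ∉ C` such that `u` receives the message transmitted by `v` (`SINR(v,u,T) ≥ β`) in every
round whose transmitter set `T ⊆ A` satisfies: `v ∈ T`, no node of `A'` other than `v` is in
`T`, and no node whose cluster lies in `C` is in `T`. -/
theorem close_pair_reception_clustered
    (α β noise ε r : ℝ) (hα : 2 < α) (hβ : 1 < β) (hnoise : 0 < noise)
    (hε₀ : 0 < ε) (hε₁ : ε < 1) (hr : 1 ≤ r) :
    ∃ κ ρ : ℕ,
      ∀ Γ : ℝ, 0 < Γ →
        ∀ (A : Finset Pt) (cl : Pt → ℕ) (center : ℕ → Pt),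
          IsRClustering A cl center r ε →
          (∀ c ∈ A.image cl, ((A.filter (fun p => cl p = c)).card : ℝ) ≤ Γ) →
          ∀ (c : ℕ) (u v : Pt), cl u = c → ClosePairC A cl Γ r ε u v →
            ∃ (A' : Finset Pt) (C : Finset ℕ),
              A' ⊆ A ∧ A'.card ≤ κ ∧ C.card ≤ ρ ∧ c ∉ C ∧
              ∀ T : Finset Pt, T ⊆ A → v ∈ T →
                (∀ w ∈ T, w ≠ v → w ∉ A') →
                (∀ w ∈ T, cl w ∉ C) →
                β ≤ sinr α (noise * β) noise v u T := by
  have hs : 0 < 1 - ε := by linarith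
  have hs1 : (1 - ε) ^ α < 1 := Real.rpow_lt_one hs.le (by linarith) (by linarith)
  have hsα : 0 < (1 - ε) ^ α := by positivity
  -- A third of the interference budget goes to each of: near own nodes, far own nodes,
  -- other clusters.
  obtain ⟨δ, hδ⟩ : ∃ δ, δ = (1 - (1 - ε) ^ α) / β / 3 := ⟨_, rfl⟩
  have hδ0 : 0 < δ := by rw [hδ]; apply div_pos (div_pos _ _) <;> linarith
  have hδ1 : δ ≤ 1 := by
    rw [hδ, div_le_one (by norm_num), div_le_iff₀ (by linarith)]
    nlinarith
  obtain ⟨Γ₀, hΓ₀1, hΓ₀⟩ := exists_density_threshold hα (r := r) (by linarith) hδ0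
  have hη : 0 < δ / Γ₀ := by positivity
  obtain ⟨κ, hκ⟩ := own_cluster_le ε hα hδ0 hΓ₀
  obtain ⟨ρ, hρ⟩ := other_clusters_le hα hε₁ (r := r) (by linarith) hη
  refine ⟨κ, ρ, fun Γ hΓ A cl center hcl hdens c u v huc hclose => ?_⟩
  obtain ⟨A', hA'sub, hA'card, hA'⟩ := hκ Γ A cl hΓ hdens u v hclose
  obtain ⟨C, hCcard, hcC, hC⟩ := hρ Γ A cl center hΓ hcl hdens c u
  refine ⟨A', C, hA'sub, hA'card, hCcard, hcC, fun T hTA hvT hTA' hTC => ?_⟩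
  obtain ⟨-, -, huv, -, ζ, hζ0, hζ1, hdist, hdε, -⟩ := hclose
  have hd : 0 < dist u v := dist_pos.mpr huv
  refine le_sinr_of_sum_le (by linarith) (by linarith) hnoise hε₁ hd hdε ?_
  have hown := hA' ((T.erase v).filter (fun w => cl w = c))
    (fun w hw => hTA (Finset.mem_of_mem_erase (Finset.mem_filter.mp hw).1))
    (fun w hw => by
      obtain ⟨hw1, hw2⟩ := Finset.mem_filter.mp hw
      obtain ⟨hwv, hwT⟩ := Finset.mem_erase.mp hw1
      exact ⟨hw2.trans huc.symm, hTA' w hwT hwv⟩)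
  have hother := hC ((T.erase v).filter (fun w => ¬ cl w = c))
    (fun w hw => hTA (Finset.mem_of_mem_erase (Finset.mem_filter.mp hw).1))
    (fun w hw => by
      obtain ⟨hw1, hw2⟩ := Finset.mem_filter.mp hw
      exact ⟨hw2, hTC w (Finset.mem_of_mem_erase hw1)⟩)
  -- Sparse case: `d(u,v) ≤ 1`. Dense case: `d(u,v) ≤ d_{Γ,r}` and `Γ * d_{Γ,r} ^ α ≤ δ ≤ Γ₀`.
  have hΓd : Γ ≤ Γ₀ * dist u v ^ (-α) := by
    rw [Real.rpow_neg hd.le, ← div_eq_mul_inv, le_div_iff₀ (by positivity)]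
    rcases le_or_gt Γ Γ₀ with hsparse | hdense
    · have : dist u v ^ α ≤ 1 := Real.rpow_le_one hd.le (by linarith) (by linarith)
      nlinarith
    · have hdD : dist u v ≤ dCrit Γ r := by
        rw [hdist]
        exact mul_le_of_le_one_left (dCrit_nonneg Γ r) hζ1
      have h1 : dist u v ^ α ≤ dCrit Γ r ^ α := Real.rpow_le_rpow hd.le hdD (by linarith)
      calc Γ * dist u v ^ α ≤ Γ * dCrit Γ r ^ α := by gcongr
        _ ≤ δ := hΓ₀ Γ hdense
        _ ≤ Γ₀ := hδ1.trans hΓ₀1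
  have hother' : Γ * (δ / Γ₀) ≤ δ * dist u v ^ (-α) := by
    calc Γ * (δ / Γ₀) ≤ Γ₀ * dist u v ^ (-α) * (δ / Γ₀) := by gcongr
      _ = δ * dist u v ^ (-α) := by field_simp
  have hbudget : (1 - (1 - ε) ^ α) / β * dist u v ^ (-α) =
      2 * δ * dist u v ^ (-α) + δ * dist u v ^ (-α) := by rw [hδ]; ring
  rw [← Finset.sum_filter_add_sum_filter_not (T.erase v) (fun w => cl w = c), hbudget]
  linarith
end

section
/- For all reals α > 2 and β > 1 there exists ε₀ ∈ (0,1) such that for every ε ∈ (0,ε₀): β·((1−ε)^{−α} + 2)·Σ_{i=1}^{∞} i^{−α} ≤ (4ε)^{−α} − 1. Consequently, in the SINR model with noise 𝒩 > 0 and power P = 𝒩·β, the total interference bound (1−ε)^{−α}·Σ_{i=1}^{∞} P·i^{−α} + 2·Σ_{k=1}^{∞} P·k^{−α} is at most ν, where ν := 𝒩·((4ε)^{−α} − 1) is the number satisfying (P·(4ε)^{−α})/(𝒩 + ν) = β. -/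
/-! As `ε → 0⁺` the left-hand side of the first inequality converges to `3 * β * S`, where `S` is
the value of the series, while `(4 * ε) ^ (-α) → ∞`; so the inequality holds for all small
`ε > 0`. The interference bound is this inequality multiplied by the noise, and the last equation
holds because `noise + ν = noise * (4 * ε) ^ (-α)`. -/

open Filter Topology


/-- For all reals `α > 2` and `β > 1` there exists `ε₀ ∈ (0,1)` such that
for every `ε ∈ (0,ε₀)`:
`β·((1−ε)^{−α} + 2)·Σ_{i=1}^{∞} i^{−α} ≤ (4ε)^{−α} − 1`.
Consequently, in the SINR model with noise `𝒩 > 0` and power `P = 𝒩·β`, the total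
interference bound `(1−ε)^{−α}·Σ_{i=1}^{∞} P·i^{−α} + 2·Σ_{k=1}^{∞} P·k^{−α}` is at most
`ν := 𝒩·((4ε)^{−α} − 1)`, and `ν` satisfies `(P·(4ε)^{−α})/(𝒩 + ν) = β`.
Sums over integers `i ≥ 1` are expressed as sums over `j : ℕ` of the terms at `i = j + 1`. -/
theorem interference_eps_bound (α β : ℝ) (hα : 2 < α) (hβ : 1 < β) :
    ∃ ε₀ : ℝ, 0 < ε₀ ∧ ε₀ < 1 ∧
      ∀ ε : ℝ, 0 < ε → ε < ε₀ →
        (β * ((1 - ε) ^ (-α) + 2) * ∑' j : ℕ, ((j + 1 : ℕ) : ℝ) ^ (-α)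
            ≤ (4 * ε) ^ (-α) - 1) ∧
        ∀ noise : ℝ, 0 < noise →
          ((1 - ε) ^ (-α) * (∑' j : ℕ, (noise * β) * ((j + 1 : ℕ) : ℝ) ^ (-α)) +
              2 * (∑' j : ℕ, (noise * β) * ((j + 1 : ℕ) : ℝ) ^ (-α))
            ≤ noise * ((4 * ε) ^ (-α) - 1)) ∧
          (noise * β) * (4 * ε) ^ (-α) /
              (noise + noise * ((4 * ε) ^ (-α) - 1)) = β := by
  set S : ℝ := ∑' j : ℕ, ((j + 1 : ℕ) : ℝ) ^ (-α)
  have hR : Tendsto (fun ε : ℝ => (4 * ε) ^ (-α)) (𝓝[>] 0) atTop := by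
    refine (tendsto_rpow_neg_nhdsGT_zero (by linarith)).comp ?_
    refine tendsto_nhdsWithin_iff.2 ⟨?_, ?_⟩
    · have h : ContinuousAt (fun ε : ℝ => 4 * ε) 0 := by fun_prop
      simpa using h.tendsto.mono_left nhdsWithin_le_nhds
    · filter_upwards [self_mem_nhdsWithin] with ε hε
      have : (0 : ℝ) < ε := hε
      exact Set.mem_Ioi.2 (by positivity)
  have hL : Tendsto (fun ε : ℝ => β * ((1 - ε) ^ (-α) + 2) * S) (𝓝[>] 0)
      (𝓝 (β * ((1 - 0) ^ (-α) + 2) * S)) := by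
    have h : ContinuousAt (fun ε : ℝ => (1 - ε) ^ (-α)) 0 :=
      ContinuousAt.rpow_const (by fun_prop) (Or.inl (by norm_num))
    exact (((h.tendsto.mono_left nhdsWithin_le_nhds).add_const 2).const_mul β).mul_const S
  -- Past a common bound of the convergent side, the divergent side exceeds it by at least `1`.
  have hev : ∀ᶠ ε : ℝ in 𝓝[>] 0, β * ((1 - ε) ^ (-α) + 2) * S ≤ (4 * ε) ^ (-α) - 1 := by
    filter_upwards [hL.eventually_le_const (lt_add_one _), hR.eventually_ge_atTop
      (β * ((1 - 0) ^ (-α) + 2) * S + 1 + 1)] with ε h₁ h₂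
    linarith
  obtain ⟨δ, hδ, hsub⟩ := mem_nhdsGT_iff_exists_Ioo_subset.1 hev
  have hδ0 : (0 : ℝ) < δ := hδ
  refine ⟨min δ (1 / 2), by positivity, (min_le_right _ _).trans_lt (by norm_num), ?_⟩
  intro ε hε hεlt
  have key : β * ((1 - ε) ^ (-α) + 2) * S ≤ (4 * ε) ^ (-α) - 1 :=
    hsub ⟨hε, hεlt.trans_le (min_le_left _ _)⟩
  refine ⟨key, fun noise hn => ⟨?_, ?_⟩⟩
  · rw [tsum_mul_left]
    calc _ = noise * (β * ((1 - ε) ^ (-α) + 2) * S) := by ring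
      _ ≤ _ := mul_le_mul_of_nonneg_left key hn.le
  · have hpos : (0 : ℝ) < (4 * ε) ^ (-α) := Real.rpow_pos_of_pos (by positivity) _
    rw [show noise + noise * ((4 * ε) ^ (-α) - 1) = noise * (4 * ε) ^ (-α) by ring]
    field_simp
end
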